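/- arXiv:1308.3284 — 2 statements merged into one kernel-verified Lean document; each statement's English description precedes it below -/
import Mathlib

section
/- Let 1 ≤ k ≤ n and let f₁,…,f_k ∈ ℂ[t] be ℂ-linearly independent polynomials, each of degree at most n−1. If every complex root of the Wronskian Wr(f₁,…,f_k) is real, then the ℂ-linear span of f₁,…,f_k has a basis consisting of polynomials with real coefficients (equivalently, the span is stable under coefficientwise complex conjugation). [Theorem of Mukhin–Tarasov–Varchenko; the Shapiro Conjecture in its Wronskian formulation.] -/
/-- The Wronskian of polynomials `f 0, …, f (k-1)`: the determinant of the `k × k`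
matrix whose `(i, j)` entry is the `i`-th derivative of `f j`. -/
noncomputable def Wr {k : ℕ} (f : Fin k → Polynomial ℂ) : Polynomial ℂ :=
  Matrix.det (Matrix.of fun i j : Fin k => Polynomial.derivative^[(i : ℕ)] (f j))

/-! Let `Wr g` have simple roots `z l`. At these roots the coefficients `A m` of the differential
operator `F ↦ Wr (g, F)`, taken in order of decreasing differentiation and up to sign, satisfy
`A (m + 1) (z l) = (A m)' (z l) - κ l * A m (z l)`. On the residues of `A m / ∏ l, (x - z l)` this
recursion is multiplication by the Calogero–Moser Lax matrix `L` of the points `z l`, with momenta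
determined by `κ`. Since the sequence terminates, `L ^ k * 1 = 0`, and then `[Z, L] = 1 1ᵀ - I`
makes the traces of the high powers of `L` vanish, so `L` is nilpotent.

With a generic twist `y` and coupling constant, the Lax matrix of the Gaudin Hamiltonians satisfies
`det (y a - Lax) = 0`, so the twists are integral over the Hamiltonians. Lying over then yields a
character of the algebra generated by the Hamiltonians which sends them to the momenta of `L`, and
at coupling one nilpotency forces the twists to zero. Applied to the Lax matrix of the
Hamiltonians, it shows that `A m x` is, up to a scalar, an eigenvalue of the Bethe operator
`∑ X, (∏ l ∉ X, (x - z l)) • ∑ g ∈ Perm X, sign g • g`, with `X` ranging over the subsets of size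
`m + 1`. For real `x` and `z` this operator is Hermitian, so the differential operator
`F ↦ Wr (g, F)` is real up to a scalar and its kernel `span g` is stable under conjugation.
Multiple roots are reached as limits of simple ones.
-/

open Equiv Finset
open scoped Matrix

/-! ### Twisted Gaudin Hamiltonians on the regular representation -/

/-- The right regular representation of a finite group by permutation matrices. -/
def rightTranslation (R : Type*) [Semiring R] (G : Type*) [Group G] [Fintype G] [DecidableEq G] :
    G →* Matrix G G R where
  toFun g := (Equiv.mulRight g).permMatrix R
  map_one' := by simp
  map_mul' g h := by rw [Equiv.mulRight_mul, Matrix.permMatrix_mul]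

theorem rightTranslation_mulVec {R G : Type*} [CommRing R] [Group G] [Fintype G] [DecidableEq G]
    (g : G) (v : G → R) : rightTranslation R G g *ᵥ v = fun σ => v (σ * g) :=
  Matrix.permMatrix_mulVec _

theorem conjTranspose_rightTranslation {R G : Type*} [Semiring R] [StarRing R] [Group G]
    [Fintype G] [DecidableEq G] (g : G) :
    (rightTranslation R G g)ᴴ = rightTranslation R G g⁻¹ :=
  (Matrix.conjTranspose_permMatrix _).trans (by rw [Equiv.inv_mulRight]; rfl)

theorem map_rightTranslation {R S G : Type*} [Semiring R] [Semiring S] [Group G] [Fintype G]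
    [DecidableEq G] (f : R →+* S) (g : G) :
    (rightTranslation R G g).map f = rightTranslation S G g := by
  ext σ τ
  simp [rightTranslation, PEquiv.toMatrix_apply, apply_ite f]

/-- Interaction weights satisfying the classical Yang–Baxter equation. -/
structure IsClassicalYangBaxter {ι R : Type*} [CommRing R] (w : ι → ι → R) : Prop where
  diag : ∀ i, w i i = 0
  antisymm : ∀ i j, w j i = -w i j
  triangle : ∀ i j k, i ≠ j → i ≠ k → j ≠ k → w i k * w j k - w i j * w j k - w i k * w j i = 0

theorem IsClassicalYangBaxter.map_smul {ι K R : Type*} [CommRing K] [CommRing R] [Algebra K R]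
    {w : ι → ι → K} (hw : IsClassicalYangBaxter w) (r : R) :
    IsClassicalYangBaxter fun i j => w i j • r where
  diag i := by rw [hw.diag, zero_smul]
  antisymm i j := by rw [hw.antisymm, neg_smul]
  triangle i j k hij hik hjk := by
    simp only [smul_mul_smul_comm, ← sub_smul, hw.triangle i j k hij hik hjk, zero_smul]

/-- The rational interaction weights of the points `z`, with `0⁻¹ = 0` on the diagonal. -/
noncomputable def cauchyWeight {ι K : Type*} [Field K] (z : ι → K) (i j : ι) : K := (z i - z j)⁻¹

theorem cauchyWeight_self {ι K : Type*} [Field K] (z : ι → K) (i : ι) :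
    cauchyWeight z i i = 0 := by
  simp [cauchyWeight]

theorem cauchyWeight_swap {ι K : Type*} [Field K] (z : ι → K) (i j : ι) :
    cauchyWeight z j i = -cauchyWeight z i j := by
  rw [cauchyWeight, cauchyWeight, ← inv_neg, neg_sub]

theorem isClassicalYangBaxter_cauchyWeight {ι K : Type*} [Field K] {z : ι → K}
    (hz : Function.Injective z) : IsClassicalYangBaxter (cauchyWeight z) where
  diag := cauchyWeight_self z
  antisymm := cauchyWeight_swap z
  triangle i j k hij hik hjk := by
    have h₁ : z i - z j ≠ 0 := sub_ne_zero.mpr (hz.ne hij)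
    have h₂ : z i - z k ≠ 0 := sub_ne_zero.mpr (hz.ne hik)
    have h₃ : z j - z k ≠ 0 := sub_ne_zero.mpr (hz.ne hjk)
    rw [cauchyWeight_swap z i j]
    simp only [cauchyWeight]
    field_simp
    ring

section Swap

variable {ι : Type*} [DecidableEq ι]

theorem swap_mul_swap_of_ne {a b c : ι} (hab : a ≠ b) (hac : a ≠ c) :
    swap b c * swap a c = swap a b * swap b c := by
  rw [mul_swap_eq_swap_mul, swap_apply_of_ne_of_ne hab hac, swap_apply_right]

theorem swap_mul_swap_comm_of_ne {a b c d : ι} (hac : a ≠ c) (had : a ≠ d) (hbc : b ≠ c)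
    (hbd : b ≠ d) : swap a b * swap c d = swap c d * swap a b := by
  rw [mul_swap_eq_swap_mul, swap_apply_of_ne_of_ne hac.symm hbc.symm,
    swap_apply_of_ne_of_ne had.symm hbd.symm]

variable {R A : Type*} [CommRing R] [Ring A] [Algebra R A] (ρ : Perm ι →* A)

theorem lie_map_swap_left {i j k : ι} (hij : i ≠ j) (hik : i ≠ k) :
    ⁅ρ (swap i j), ρ (swap j k)⁆ = -⁅ρ (swap i k), ρ (swap j k)⁆ := by
  have h : swap j k * swap i j = swap i k * swap j k := by
    rw [swap_comm j k, swap_mul_swap_of_ne hik hij]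
  simp only [Ring.lie_def, ← map_mul, ← swap_mul_swap_of_ne hij hik, h, neg_sub]

theorem lie_map_swap_right {i j k : ι} (hij : i ≠ j) (hjk : j ≠ k) :
    ⁅ρ (swap i k), ρ (swap i j)⁆ = -⁅ρ (swap i k), ρ (swap j k)⁆ := by
  have h₁ : swap i k * swap i j = swap j k * swap i k := by
    rw [swap_comm i k, swap_comm i j, swap_mul_swap_of_ne hjk hij.symm]
  have h₂ : swap i j * swap i k = swap i k * swap j k := by
    rw [swap_comm i j, swap_mul_swap_of_ne hij.symm hjk]
  simp only [Ring.lie_def, ← map_mul, h₁, h₂, neg_sub]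

theorem lie_map_swap_of_ne {i j k l : ι} (hik : i ≠ k) (hil : i ≠ l) (hjk : j ≠ k) (hjl : j ≠ l) :
    ⁅ρ (swap i j), ρ (swap k l)⁆ = 0 := by
  rw [Ring.lie_def, ← map_mul, ← map_mul, swap_mul_swap_comm_of_ne hik hil hjk hjl, sub_self]

variable [Fintype ι] {w : ι → ι → R}

attribute [local instance] LieRing.ofAssociativeRing

theorem commute_sum_smul_map_swap (hw : IsClassicalYangBaxter w) {i k : ι} (hik : i ≠ k) :
    Commute (∑ j, w i j • ρ (swap i j)) (∑ l, w k l • ρ (swap k l)) := by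
  let T (j l : ι) : A := ⁅w i j • ρ (swap i j), w k l • ρ (swap k l)⁆
  have T_left (l : ι) : T i l = 0 := by simp [T, hw.diag]
  have T_right (j : ι) : T j k = 0 := by simp [T, hw.diag]
  have T_swap : T k i = 0 := by simp [T, LieAlgebra.lie_smul, swap_comm k i]
  have T_row (j : ι) (hjk : j ≠ k) : ∑ l, T j l = T j j + T j i := by
    rcases eq_or_ne j i with rfl | hji
    · simp [T_left]
    refine Fintype.sum_eq_add j i hji fun l hl => ?_
    rcases eq_or_ne l k with rfl | -
    · exact T_right j
    · simp [T, LieAlgebra.lie_smul, lie_map_swap_of_ne ρ hik hl.2.symm hjk hl.1.symm]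
  have T_triangle (m : ι) : T k m + (T m m + T m i) = 0 := by
    rcases eq_or_ne m i with rfl | hmi
    · simp [T_left, T_swap]
    rcases eq_or_ne m k with rfl | hmk
    · simp [T_right, T_swap]
    have h₁ := lie_map_swap_left ρ hik hmi.symm
    have h₂ := lie_map_swap_right ρ hik hmk.symm
    simp only [T, smul_lie, LieAlgebra.lie_smul, smul_smul, swap_comm k i, h₁, h₂,
      smul_neg, ← neg_smul, ← add_smul]
    rw [← zero_smul R ⁅ρ (swap i m), ρ (swap k m)⁆]
    congr 1
    linear_combination hw.triangle i k m hik hmi.symm hmk.symm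
  rw [commute_iff_lie_eq, sum_lie_sum]
  calc ∑ j, ∑ l, T j l
      = ∑ l, T k l + ∑ j ∈ univ.erase k, ∑ l, T j l := (add_sum_erase _ _ (mem_univ k)).symm
    _ = ∑ l, T k l + ∑ j ∈ univ.erase k, (T j j + T j i) := by
        rw [sum_congr rfl fun j hj => T_row j (ne_of_mem_erase hj)]
    _ = ∑ l, T k l + ∑ j, (T j j + T j i) := by
        rw [sum_erase]
        rw [T_right, T_swap, add_zero]
    _ = 0 := by
        rw [← sum_add_distrib]
        exact sum_eq_zero fun m _ => T_triangle m

end Swap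

section Gaudin

variable {ι R : Type*} [Fintype ι] [DecidableEq ι] [CommRing R]

/-- The twist operator of the `i`-th factor: multiplication by `y (σ i)` on functions of a
permutation `σ`. -/
def diagonalTwist (y : ι → R) (i : ι) : Matrix (Perm ι) (Perm ι) R :=
  Matrix.diagonal fun σ => y (σ i)

/-- The Gaudin Hamiltonians with interaction weights `w` and twist `y`, acting on functions on the
symmetric group. -/
def gaudin (w : ι → ι → R) (y : ι → R) (i : ι) : Matrix (Perm ι) (Perm ι) R :=
  diagonalTwist y i - ∑ j, w i j • rightTranslation R (Perm ι) (swap i j)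

theorem rightTranslation_mul_diagonalTwist (y : ι → R) (g : Perm ι) (i : ι) :
    rightTranslation R (Perm ι) g * diagonalTwist y i =
      diagonalTwist y (g i) * rightTranslation R (Perm ι) g := by
  ext σ τ
  simp only [rightTranslation, diagonalTwist, MonoidHom.coe_mk, OneHom.coe_mk,
    Matrix.mul_diagonal, Matrix.diagonal_mul, PEquiv.toMatrix_apply]
  split_ifs with h <;> simp_all
  simp [← h]

attribute [local instance] LieRing.ofAssociativeRing

theorem lie_diagonalTwist_sum_rightTranslation (w : ι → ι → R) (y : ι → R) {i k : ι}
    (hik : i ≠ k) :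
    ⁅diagonalTwist y i, ∑ l, w k l • rightTranslation R (Perm ι) (swap k l)⁆ =
      w k i • ((diagonalTwist y i - diagonalTwist y k) *
        rightTranslation R (Perm ι) (swap i k)) := by
  have h (l : ι) : ⁅diagonalTwist y i, rightTranslation R (Perm ι) (swap k l)⁆ =
      (diagonalTwist y i - diagonalTwist y (swap k l i)) *
        rightTranslation R (Perm ι) (swap k l) := by
    rw [Ring.lie_def, rightTranslation_mul_diagonalTwist, sub_mul]
  simp only [lie_sum, LieAlgebra.lie_smul, h]
  rw [Fintype.sum_eq_single i fun l hl => ?_]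
  · rw [swap_apply_right, swap_comm]
  · rw [swap_apply_of_ne_of_ne hik hl.symm, sub_self, zero_mul, smul_zero]

theorem commute_gaudin {w : ι → ι → R} (hw : IsClassicalYangBaxter w) (y : ι → R) (i k : ι) :
    Commute (gaudin w y i) (gaudin w y k) := by
  rcases eq_or_ne i k with rfl | hik
  · exact Commute.refl _
  have h_twist : ⁅diagonalTwist y i, diagonalTwist y k⁆ = 0 :=
    commute_iff_lie_eq.mp (Matrix.commute_diagonal _ _)
  have h_swap := commute_iff_lie_eq.mp
    (commute_sum_smul_map_swap (rightTranslation R (Perm ι)) hw hik)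
  rw [commute_iff_lie_eq, gaudin, gaudin, sub_lie, lie_sub, lie_sub, h_twist, h_swap,
    ← lie_skew _ (diagonalTwist y k), lie_diagonalTwist_sum_rightTranslation w y hik,
    lie_diagonalTwist_sum_rightTranslation w y hik.symm, swap_comm k i, hw.antisymm k i,
    sub_mul, sub_mul]
  module

theorem mapMatrix_gaudin {S : Type*} [CommRing S] (f : R →+* S) (w : ι → ι → R) (y : ι → R)
    (i : ι) : f.mapMatrix (gaudin w y i) = gaudin (fun i j => f (w i j)) (fun i => f (y i)) i := by
  have h_twist : f.mapMatrix (diagonalTwist y i) = diagonalTwist (fun i => f (y i)) i :=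
    Matrix.diagonal_map (map_zero f)
  simp only [gaudin, map_sub, map_sum, h_twist, RingHom.mapMatrix_apply,
    Matrix.map_smul' _ _ _ (map_mul f), map_rightTranslation]

end Gaudin

section Lax

variable {ι : Type*} [DecidableEq ι]

/-- The Calogero–Moser Lax matrix with momenta `p` and off-diagonal interaction weights `w`. -/
def laxMatrix {R : Type*} [Ring R] (w : ι → ι → R) (p : ι → R) : Matrix ι ι R :=
  Matrix.diagonal p + Matrix.of w

theorem laxMatrix_map {R S : Type*} [Ring R] [Ring S] (f : R →+* S) (w : ι → ι → R) (p : ι → R) :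
    (laxMatrix w p).map f = laxMatrix (fun i j => f (w i j)) fun i => f (p i) := by
  rw [laxMatrix, Matrix.map_add _ (map_add f), Matrix.diagonal_map (map_zero f)]
  rfl

theorem laxMatrix_mulVec [Fintype ι] {R : Type*} [Ring R] (w : ι → ι → R) (p v : ι → R) (i : ι) :
    (laxMatrix w p *ᵥ v) i = p i * v i + ∑ j, w i j * v j := by
  rw [laxMatrix, Matrix.add_mulVec, Pi.add_apply, Matrix.mulVec_diagonal]
  rfl

theorem map_laxMatrix_pow_mulVec [Fintype ι] {R S : Type*} [Ring R] [Ring S] (f : R →+* S)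
    (w : ι → ι → R) (p : ι → R) (m : ℕ) (j : ι) :
    f ((laxMatrix w p ^ m *ᵥ 1) j) =
      ((laxMatrix (fun i j => f (w i j)) fun i => f (p i)) ^ m *ᵥ 1) j := by
  rw [RingHom.map_mulVec, ← laxMatrix_map, ← RingHom.mapMatrix_apply, map_pow]
  congr 1
  ext
  exact map_one f

/-- The indicator function of the permutations sending `j` to `a`. -/
def placeIndicator (R : Type*) [Zero R] [One R] (a j : ι) : Perm ι → R :=
  fun σ => if σ j = a then 1 else 0

variable [Fintype ι]

theorem gaudin_mulVec_placeIndicator {R : Type*} [CommRing R] (w : ι → ι → R) (y : ι → R)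
    (a i : ι) :
    gaudin w y i *ᵥ placeIndicator R a i =
      y a • placeIndicator R a i - ∑ j, w i j • placeIndicator R a j := by
  have h_twist : diagonalTwist y i *ᵥ placeIndicator R a i = y a • placeIndicator R a i := by
    ext σ
    rw [diagonalTwist, Matrix.mulVec_diagonal]
    simp only [placeIndicator, Pi.smul_apply, smul_eq_mul]
    split_ifs with h <;> simp [h]
  have h_swap (j : ι) : rightTranslation R (Perm ι) (swap i j) *ᵥ placeIndicator R a i =
      placeIndicator R a j := by
    rw [rightTranslation_mulVec]
    ext σ
    simp [placeIndicator]
  simp only [gaudin, Matrix.sub_mulVec, Matrix.sum_mulVec, Matrix.smul_mulVec, h_twist, h_swap]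

end Lax

theorem map_prod_eq_diagonal {m α R B : Type*} [Fintype m] [DecidableEq m] [CommRing R]
    [CommRing B] (F : B →+* Matrix m m R) (s : Finset α) (u : α → B) (v : m → α → R)
    (h : ∀ i ∈ s, F (u i) = Matrix.diagonal fun x => v x i) :
    F (∏ i ∈ s, u i) = Matrix.diagonal fun x => ∏ i ∈ s, v x i := by
  classical
  induction s using Finset.induction_on with
  | empty => simp
  | insert a s ha ih =>
    rw [prod_insert ha, map_mul, h a (mem_insert_self a s),
      ih fun i hi => h i (mem_insert_of_mem hi), Matrix.diagonal_mul_diagonal]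
    simp only [prod_insert ha]

theorem det_mulVec_eq_zero {ι m R B : Type*} [Fintype ι] [DecidableEq ι] [Fintype m]
    [DecidableEq m] [CommRing R] [CommRing B] (ρ : B →+* Matrix m m R) (N : Matrix ι ι B)
    (v : ι → m → R) (h : ∀ i, ∑ j, ρ (N i j) *ᵥ v j = 0) (k : ι) : ρ N.det *ᵥ v k = 0 :=
  calc ρ N.det *ᵥ v k
      = ∑ j, ρ ((N.adjugate * N) k j) *ᵥ v j := by
        rw [Matrix.adjugate_mul, Fintype.sum_eq_single k fun j hj => ?_]
        · simp
        · simp [Matrix.one_apply_ne hj.symm]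
    _ = ∑ i, ρ (N.adjugate k i) *ᵥ ∑ j, ρ (N i j) *ᵥ v j := by
        simp only [Matrix.mul_apply, map_sum, map_mul, Matrix.sum_mulVec, Matrix.mulVec_sum,
          Matrix.mulVec_mulVec]
        exact sum_comm
    _ = 0 := by simp [h]

section Spectrum

variable {ι R S B : Type*} [Fintype ι] [DecidableEq ι] [CommRing R] [CommRing S] [CommRing B]
  [Algebra R B]

/-- The matrix whose column at `σ` is `placeIndicator R a (σ⁻¹ a)` multiplied by the product of all
`H i - y b` with `b ≠ σ i`. When the `H i` become diagonal it singles out the joint eigenvector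
at `σ`. -/
def separatingMatrix (y : ι → R) (E : B →ₐ[R] Matrix (Perm ι) (Perm ι) R) (H : ι → B) (a : ι) :
    Matrix (Perm ι) (Perm ι) R :=
  Matrix.of fun τ σ => (E (∏ i, ∏ b ∈ univ.erase (σ i), (H i - algebraMap R B (y b))) *ᵥ
    placeIndicator R a (σ⁻¹ a)) τ

variable {w : ι → ι → R} {y : ι → R} {e : R →+* S} {E : B →ₐ[R] Matrix (Perm ι) (Perm ι) R}
  {H : ι → B}

theorem mul_separatingMatrix_eq_zero {a : ι} {x : B}
    (hx : ∀ k, E x *ᵥ placeIndicator R a k = 0) : E x * separatingMatrix y E H a = 0 := by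
  ext τ σ
  have h (b : B) (k : ι) : E x *ᵥ (E b *ᵥ placeIndicator R a k) = 0 := by
    rw [Matrix.mulVec_mulVec, ← map_mul, mul_comm, map_mul, ← Matrix.mulVec_mulVec, hx,
      Matrix.mulVec_zero]
  exact congrFun (h _ _) τ

theorem mapMatrix_prod_sub_eq_diagonal (hw : ∀ i j, e (w i j) = 0)
    (hH : ∀ i, E (H i) = gaudin w y i) (σ : Perm ι) :
    e.mapMatrix (E (∏ i, ∏ b ∈ univ.erase (σ i), (H i - algebraMap R B (y b)))) =
      Matrix.diagonal fun τ : Perm ι =>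
        ∏ i, ∏ b ∈ univ.erase (σ i), (e (y (τ i)) - e (y b)) := by
  have h_factor (i b : ι) : e.mapMatrix (E (H i - algebraMap R B (y b))) =
      Matrix.diagonal fun τ : Perm ι => e (y (τ i)) - e (y b) := by
    rw [map_sub, AlgHom.commutes, hH, map_sub, mapMatrix_gaudin]
    simp only [hw, gaudin, zero_smul, sum_const_zero, sub_zero, diagonalTwist,
      Matrix.algebraMap_eq_diagonal, RingHom.mapMatrix_apply, Matrix.diagonal_map (map_zero e),
      Matrix.diagonal_sub]
    rfl
  exact map_prod_eq_diagonal (e.mapMatrix.comp E.toRingHom) _ _ _ fun i _ =>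
    map_prod_eq_diagonal (e.mapMatrix.comp E.toRingHom) _ _ _ fun b _ => h_factor i b

theorem mapMatrix_separatingMatrix (hw : ∀ i j, e (w i j) = 0)
    (hH : ∀ i, E (H i) = gaudin w y i) (a : ι) :
    e.mapMatrix (separatingMatrix y E H a) = Matrix.diagonal fun σ : Perm ι =>
      ∏ i, ∏ b ∈ univ.erase (σ i), (e (y (σ i)) - e (y b)) := by
  ext τ σ
  have h_entry : e.mapMatrix (separatingMatrix y E H a) τ σ =
      (∏ i, ∏ b ∈ univ.erase (σ i), (e (y (τ i)) - e (y b))) *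
        e (placeIndicator R a (σ⁻¹ a) τ) := by
    rw [← Matrix.mulVec_diagonal (fun τ : Perm ι => ∏ i, ∏ b ∈ univ.erase (σ i),
      (e (y (τ i)) - e (y b))) (fun τ => e (placeIndicator R a (σ⁻¹ a) τ)),
      ← mapMatrix_prod_sub_eq_diagonal hw hH σ]
    exact RingHom.map_mulVec e _ _ _
  rw [h_entry]
  rcases eq_or_ne τ σ with rfl | hτσ
  · simp [placeIndicator]
  · obtain ⟨i, hi⟩ := DFunLike.ne_iff.mp hτσ
    rw [Matrix.diagonal_apply_ne _ hτσ, prod_eq_zero (mem_univ i), zero_mul]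
    exact prod_eq_zero (mem_erase.mpr ⟨hi, mem_univ _⟩) (sub_self _)

variable [IsDomain S]

theorem det_separatingMatrix_ne_zero (hw : ∀ i j, e (w i j) = 0) (hy : Function.Injective (e ∘ y))
    (hH : ∀ i, E (H i) = gaudin w y i) (a : ι) : (separatingMatrix y E H a).det ≠ 0 := by
  refine fun h => ?_
  have h_map : (e.mapMatrix (separatingMatrix y E H a)).det = 0 := by
    rw [← RingHom.map_det, h, map_zero]
  rw [mapMatrix_separatingMatrix hw hH, Matrix.det_diagonal] at h_map
  refine prod_ne_zero_iff.mpr (fun σ _ => ?_) h_map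
  exact prod_ne_zero_iff.mpr fun i _ => prod_ne_zero_iff.mpr fun b hb =>
    sub_ne_zero.mpr (hy.ne (ne_of_mem_erase hb).symm)

theorem eval_charpoly_laxMatrix_gaudin [IsDomain R] (hw : ∀ i j, e (w i j) = 0)
    (hy : Function.Injective (e ∘ y)) (hE : Function.Injective E)
    (hH : ∀ i, E (H i) = gaudin w y i) (a : ι) :
    (laxMatrix (fun i j => algebraMap R B (w i j)) H).charpoly.eval
      (algebraMap R B (y a)) = 0 := by
  set N := Matrix.scalar ι (algebraMap R B (y a)) -
    laxMatrix (fun i j => algebraMap R B (w i j)) H with hN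
  have h_entry (i j : ι) : E (N i j) =
      (if i = j then algebraMap R _ (y a) - gaudin w y i else 0) - algebraMap R _ (w i j) := by
    rcases eq_or_ne i j with rfl | hij
    · simp [hN, laxMatrix, hH, sub_sub]
    · simp [hN, laxMatrix, hij]
  have h_row (i : ι) : ∑ j, E (N i j) *ᵥ placeIndicator R a j = 0 := by
    have h_mulVec (j : ι) : E (N i j) *ᵥ placeIndicator R a j =
        (if i = j then y a • placeIndicator R a i - gaudin w y i *ᵥ placeIndicator R a i else 0) -
          w i j • placeIndicator R a j := by
      rw [h_entry]
      rcases eq_or_ne i j with rfl | hij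
      · simp [Matrix.sub_mulVec, Algebra.algebraMap_eq_smul_one, Matrix.smul_mulVec]
      · simp [hij, Matrix.neg_mulVec, Algebra.algebraMap_eq_smul_one, Matrix.smul_mulVec]
    simp only [h_mulVec, sum_sub_distrib, sum_ite_eq, mem_univ, if_true,
      gaudin_mulVec_placeIndicator, sub_sub_cancel, sub_self]
  have h_mul : E N.det * separatingMatrix y E H a = 0 :=
    mul_separatingMatrix_eq_zero (det_mulVec_eq_zero E.toRingHom N _ h_row)
  have h_smul : (separatingMatrix y E H a).det • E N.det = 0 := by
    rw [← mul_one (E N.det), ← mul_smul_comm, ← Matrix.mul_adjugate, ← mul_assoc, h_mul, zero_mul]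
  rw [Matrix.eval_charpoly, ← map_eq_zero_iff E hE]
  exact (smul_eq_zero.mp h_smul).resolve_left (det_separatingMatrix_ne_zero hw hy hH a)

end Spectrum

theorem charpoly_isRoot_of_algHom_injective {m R B K : Type*} [Fintype m] [DecidableEq m]
    [CommRing R] [CommRing B] [Algebra R B] [CommRing K] {E : B →ₐ[R] Matrix m m R}
    (hE : Function.Injective E) (φ : B →+* K) (b : B) :
    ((φ.comp (algebraMap R B)).mapMatrix (E b)).charpoly.IsRoot (φ b) := by
  have h : Polynomial.aeval b (E b).charpoly = 0 := by
    rw [← map_eq_zero_iff E hE, ← Polynomial.aeval_algHom_apply, Matrix.aeval_self_charpoly]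
  rw [RingHom.mapMatrix_apply, Matrix.charpoly_map, Polynomial.IsRoot, Polynomial.eval_map,
    ← Polynomial.hom_eval₂, ← Polynomial.aeval_def, h, map_zero]

theorem exists_algHom_comp_eq_of_isIntegral {F P B K : Type*} [CommRing F] [CommRing P]
    [CommRing B] [Field K] [IsAlgClosed K] [Algebra F P] [Algebra F B] [Algebra F K]
    {θ : P →ₐ[F] B} (hinj : Function.Injective θ) (hint : (θ : P →+* B).IsIntegral)
    {ev : P →ₐ[F] K} (hev : Function.Surjective ev) : ∃ φ : B →ₐ[F] K, φ.comp θ = ev := by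
  algebraize [(θ : P →+* B)]
  have := RingHom.ker_isMaximal_of_surjective ev hev
  have : FaithfulSMul P B := (faithfulSMul_iff_algebraMap_injective P B).mpr hinj
  obtain ⟨Q, hQ, hQker⟩ := Ideal.exists_maximal_ideal_liesOver_of_isIntegral (S := B)
    (RingHom.ker ev)
  let := Ideal.Quotient.field (RingHom.ker ev)
  let := (Ideal.kerLiftAlg ev).toRingHom.toAlgebra
  let ψ : B ⧸ Q →ₐ[P ⧸ RingHom.ker ev] K := IsAlgClosed.lift
  have hψ (x : P) : ψ (Ideal.Quotient.mk Q (θ x)) = ev x := ψ.commutes (Ideal.Quotient.mk _ x)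
  refine ⟨{ ψ.toRingHom.comp (Ideal.Quotient.mk Q) with commutes' := fun c => ?_ },
    AlgHom.ext hψ⟩
  have h := hψ (algebraMap F P c)
  rwa [θ.commutes, ev.commutes] at h

open Polynomial in
theorem injective_of_forall_eval_zero_eq_zero {A B : Type*} [CommRing A] [CommRing B]
    (θ : A[X] →+* B) (hX : θ X ∈ nonZeroDivisors B) (h : ∀ g, θ g = 0 → g.eval 0 = 0) :
    Function.Injective θ := by
  refine (injective_iff_map_eq_zero θ).mpr fun g hg => by_contra fun hg0 => ?_
  obtain ⟨q, hq, hXq⟩ := exists_eq_pow_rootMultiplicity_mul_and_not_dvd g hg0 0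
  rw [C_0, sub_zero] at hq hXq
  rw [hq, map_mul, map_pow, mul_comm] at hg
  have hq0 : θ q = 0 := mem_nonZeroDivisors_iff_right.mp (pow_mem hX _) _ hg
  exact hXq (X_dvd_iff.mpr ((coeff_zero_eq_eval_zero q).trans (h q hq0)))

/-! ### Characters of the Gaudin algebra -/

/-- The base ring of the deformation of the Gaudin Hamiltonians: polynomials in a coupling constant
over polynomials in the twist parameters. -/
abbrev TwistRing (ι K : Type*) [CommSemiring K] : Type _ := Polynomial (MvPolynomial ι K)

section Character

variable {ι K : Type*}

/-- The interaction weights `w` multiplied by the coupling constant. -/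
noncomputable def scaledWeight [CommSemiring K] (w : ι → ι → K) (i j : ι) : TwistRing ι K :=
  w i j • Polynomial.X

/-- The twist parameters as elements of `TwistRing ι K`. -/
noncomputable def genericTwist [CommSemiring K] (i : ι) : TwistRing ι K :=
  Polynomial.C (MvPolynomial.X i)

/-- The homomorphism from `TwistRing ι K` specializing the coupling constant to `h` and the twist
parameters to `H`. -/
noncomputable def twistHom {B : Type*} [CommSemiring K] [CommSemiring B] [Algebra K B] (h : B)
    (H : ι → B) : TwistRing ι K →ₐ[K] B :=
  Polynomial.aevalTower (MvPolynomial.aeval H) h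

section

variable [CommSemiring K] {B : Type*} [CommSemiring B] [Algebra K B] (h : B) (H : ι → B)

@[simp]
theorem twistHom_X : twistHom (K := K) h H Polynomial.X = h :=
  Polynomial.aevalTower_X _ _

@[simp]
theorem twistHom_genericTwist (i : ι) : twistHom (K := K) h H (genericTwist i) = H i := by
  simp [twistHom, genericTwist]

@[simp]
theorem twistHom_scaledWeight (w : ι → ι → K) (i j : ι) :
    twistHom h H (scaledWeight w i j) = w i j • h := by
  rw [scaledWeight, map_smul, twistHom_X]

theorem twistRing_algHom_ext {A : Type*} [Semiring A] [Algebra K A] {f g : TwistRing ι K →ₐ[K] A}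
    (hT : ∀ i, f (genericTwist i) = g (genericTwist i)) (hX : f Polynomial.X = g Polynomial.X) :
    f = g :=
  Polynomial.algHom_ext' (MvPolynomial.algHom_ext hT) hX

end

variable [Field K] {B : Type*} [CommRing B] [Algebra (TwistRing ι K) B] [Algebra K B]
  [IsScalarTower K (TwistRing ι K) B] (w : ι → ι → K)

theorem algebraMap_scaledWeight (i j : ι) : algebraMap (TwistRing ι K) B (scaledWeight w i j) =
    w i j • algebraMap (TwistRing ι K) B Polynomial.X :=
  map_smul (IsScalarTower.toAlgHom K (TwistRing ι K) B) _ _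

variable [Fintype ι] [DecidableEq ι]
  {E : B →ₐ[TwistRing ι K] Matrix (Perm ι) (Perm ι) (TwistRing ι K)} {H : ι → B}

theorem eval_charpoly_laxMatrix_twistHom (hE : Function.Injective E)
    (hH : ∀ i, E (H i) = gaudin (scaledWeight w) genericTwist i) (a : ι) :
    (laxMatrix (scaledWeight w) genericTwist).charpoly.eval₂
      (twistHom (K := K) (algebraMap (TwistRing ι K) B Polynomial.X) H : TwistRing ι K →+* B)
      (algebraMap (TwistRing ι K) B (genericTwist a)) = 0 := by
  rw [← Polynomial.eval_map, ← Matrix.charpoly_map, laxMatrix_map]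
  simp only [RingHom.coe_coe, twistHom_genericTwist, twistHom_scaledWeight,
    ← algebraMap_scaledWeight]
  refine eval_charpoly_laxMatrix_gaudin (e := Polynomial.evalRingHom (0 : MvPolynomial ι K))
    (fun i j => ?_) (fun i j hij => ?_) hE hH a
  · simp [scaledWeight]
  · simpa [genericTwist] using hij

theorem isIntegralElem_twistHom_algebraMap (hE : Function.Injective E)
    (hH : ∀ i, E (H i) = gaudin (scaledWeight w) genericTwist i) (r : TwistRing ι K) :
    (twistHom (K := K) (algebraMap (TwistRing ι K) B Polynomial.X) H :
      TwistRing ι K →+* B).IsIntegralElem (algebraMap (TwistRing ι K) B r) := by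
  set θ := twistHom (K := K) (algebraMap (TwistRing ι K) B Polynomial.X) H
  have h_image (r : TwistRing ι K) : (θ : TwistRing ι K →+* B).IsIntegralElem (θ r) :=
    RingHom.isIntegralElem_map _
  have hX : algebraMap (TwistRing ι K) B Polynomial.X = θ Polynomial.X := (twistHom_X _ H).symm
  induction r using Polynomial.induction_on' with
  | add p q hp hq => rw [map_add]; exact hp.add _ hq
  | monomial k a =>
    rw [← Polynomial.C_mul_X_pow_eq_monomial, map_mul, map_pow, hX, ← map_pow]
    refine RingHom.IsIntegralElem.mul _ ?_ (h_image _)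
    induction a using MvPolynomial.induction_on with
    | C c =>
      convert h_image (algebraMap K _ c) using 1
      rw [θ.commutes, IsScalarTower.algebraMap_apply K (TwistRing ι K) B]
      rfl
    | add p q hp hq => rw [map_add, map_add]; exact hp.add _ hq
    | mul_X p i hp =>
      rw [map_mul, map_mul]
      exact hp.mul _ ⟨_, Matrix.charpoly_monic _, eval_charpoly_laxMatrix_twistHom w hE hH i⟩

theorem isIntegral_twistHom (hE : Function.Injective E)
    (hH : ∀ i, E (H i) = gaudin (scaledWeight w) genericTwist i)
    (hgen : Algebra.adjoin (TwistRing ι K) (Set.range H) = ⊤) :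
    (twistHom (K := K) (algebraMap (TwistRing ι K) B Polynomial.X) H :
      TwistRing ι K →+* B).IsIntegral := by
  intro b
  have hb : b ∈ Algebra.adjoin (TwistRing ι K) (Set.range H) := hgen ▸ Algebra.mem_top
  induction hb using Algebra.adjoin_induction with
  | mem x hx =>
    obtain ⟨i, rfl⟩ := hx
    rw [← twistHom_genericTwist (K := K) (algebraMap (TwistRing ι K) B Polynomial.X) H i]
    exact RingHom.isIntegralElem_map _
  | algebraMap r => exact isIntegralElem_twistHom_algebraMap w hE hH r
  | add x y _ _ hx hy => exact hx.add _ hy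
  | mul x y _ _ hx hy => exact hx.mul _ hy

theorem injective_twistHom (hE : Function.Injective E)
    (hH : ∀ i, E (H i) = gaudin (scaledWeight w) genericTwist i) :
    Function.Injective (twistHom (K := K) (algebraMap (TwistRing ι K) B Polynomial.X) H) := by
  set θ := twistHom (K := K) (algebraMap (TwistRing ι K) B Polynomial.X) H with hθ
  let e : TwistRing ι K →ₐ[K] MvPolynomial ι K := twistHom 0 MvPolynomial.X
  have h_diagonal : (e.mapMatrix.comp (E.restrictScalars K)).comp θ =
      (Matrix.diagonalAlgHom K).comp
        (AlgHom.pi fun σ : Perm ι => twistHom 0 fun i => MvPolynomial.X (σ i)) := by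
    refine twistRing_algHom_ext (fun i => ?_) ?_
    · change (e : TwistRing ι K →+* MvPolynomial ι K).mapMatrix (E (θ (genericTwist i))) = _
      rw [hθ, twistHom_genericTwist, hH, mapMatrix_gaudin]
      simp [e, gaudin, diagonalTwist]
    · ext σ τ : 1
      rcases eq_or_ne σ τ with rfl | hστ <;> simp [e, Algebra.algebraMap_eq_smul_one, *]
  refine injective_of_forall_eval_zero_eq_zero (θ : TwistRing ι K →+* B) ?_ fun g hg => ?_
  · refine mem_nonZeroDivisors_iff_right.mpr fun b hb => ?_
    rw [RingHom.coe_coe, hθ, twistHom_X, mul_comm, ← Algebra.smul_def,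
      ← map_eq_zero_iff E hE, map_smul] at hb
    exact (map_eq_zero_iff E hE).mp ((smul_eq_zero.mp hb).resolve_left Polynomial.X_ne_zero)
  · have h_entry := congrArg (fun M => M 1 1) (DFunLike.congr_fun h_diagonal g)
    have hg' : θ g = 0 := hg
    have h_eval : twistHom (K := K) 0 MvPolynomial.X g = g.eval 0 := by
      rw [twistHom, MvPolynomial.aeval_X_left]
      rfl
    simpa [hg', h_eval] using h_entry.symm

theorem exists_character [IsAlgClosed K] (hE : Function.Injective E)
    (hH : ∀ i, E (H i) = gaudin (scaledWeight w) genericTwist i)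
    (hgen : Algebra.adjoin (TwistRing ι K) (Set.range H) = ⊤) {p : ι → K}
    (hp : ∀ x, (laxMatrix w p).charpoly.IsRoot x → x = 0) :
    ∃ φ : B →ₐ[K] K, φ.comp (IsScalarTower.toAlgHom K (TwistRing ι K) B) = twistHom 1 0 ∧
      ∀ i, φ (H i) = p i := by
  obtain ⟨φ, hφ⟩ := exists_algHom_comp_eq_of_isIntegral (injective_twistHom w hE hH)
    (isIntegral_twistHom w hE hH hgen) (ev := twistHom (1 : K) p)
    fun c => ⟨algebraMap K _ c, (twistHom (1 : K) p).commutes c⟩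
  have hφ_X : φ (algebraMap (TwistRing ι K) B Polynomial.X) = 1 := by
    simpa using DFunLike.congr_fun hφ Polynomial.X
  have hφ_H (i : ι) : φ (H i) = p i := by
    simpa using DFunLike.congr_fun hφ (genericTwist i)
  have hφ_twist (i : ι) : φ (algebraMap (TwistRing ι K) B (genericTwist i)) = 0 := by
    have h := congrArg (φ : B →+* K) (eval_charpoly_laxMatrix_twistHom w hE hH i)
    rw [map_zero, Polynomial.hom_eval₂, ← Polynomial.eval_map, ← Matrix.charpoly_map,
      laxMatrix_map] at h
    simpa [hφ_X, hφ_H] using hp _ (by simpa [hφ_X, hφ_H] using h)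
  refine ⟨φ, twistRing_algHom_ext (fun i => ?_) ?_, hφ_H⟩
  · simpa using hφ_twist i
  · simpa using hφ_X

end Character

section QuantumLax

variable {ι K : Type*} [Fintype ι] [DecidableEq ι] [Field K] (w : ι → ι → K)

/-- The matrix-valued Lax matrix whose momenta are the untwisted Gaudin Hamiltonians. -/
def quantumLax : Matrix ι ι (Matrix (Perm ι) (Perm ι) K) :=
  laxMatrix (fun i j => algebraMap K _ (w i j)) (gaudin w 0)

variable [IsAlgClosed K] {p : ι → K}

theorem charpoly_quantumLax_isRoot_of_algHom {B : Type*} [CommRing B] [Algebra (TwistRing ι K) B]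
    [Algebra K B] [IsScalarTower K (TwistRing ι K) B]
    {E : B →ₐ[TwistRing ι K] Matrix (Perm ι) (Perm ι) (TwistRing ι K)} {H : ι → B}
    (hE : Function.Injective E) (hH : ∀ i, E (H i) = gaudin (scaledWeight w) genericTwist i)
    (hgen : Algebra.adjoin (TwistRing ι K) (Set.range H) = ⊤)
    (hp : ∀ x, (laxMatrix w p).charpoly.IsRoot x → x = 0) (c : ι → K) (m : ℕ) :
    (∑ j, c j • (quantumLax w ^ m *ᵥ 1) j).charpoly.IsRoot
      (∑ j, c j * (laxMatrix w p ^ m *ᵥ 1) j) := by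
  obtain ⟨φ, hφ, hφH⟩ := exists_character w hE hH hgen hp
  let L : Matrix ι ι B := laxMatrix (fun i j => algebraMap (TwistRing ι K) B (scaledWeight w i j)) H
  let b : B := ∑ j, c j • (L ^ m *ᵥ 1) j
  have hφ_weight (i j : ι) : φ (algebraMap (TwistRing ι K) B (scaledWeight w i j)) = w i j := by
    simpa using DFunLike.congr_fun hφ (scaledWeight w i j)
  have h_value : φ b = ∑ j, c j * (laxMatrix w p ^ m *ᵥ 1) j := by
    have h_map (j : ι) := map_laxMatrix_pow_mulVec (φ : B →+* K)
      (fun i j => algebraMap (TwistRing ι K) B (scaledWeight w i j)) H m j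
    simp only [RingHom.coe_coe, hφ_weight, hφH] at h_map
    simp only [b, L, map_sum, map_smul, h_map, smul_eq_mul]
  let ev : TwistRing ι K →ₐ[K] K := twistHom 1 0
  let F : B →ₐ[K] Matrix (Perm ι) (Perm ι) K := ev.mapMatrix.comp (E.restrictScalars K)
  have hF_weight (i j : ι) : F (algebraMap (TwistRing ι K) B (scaledWeight w i j)) =
      algebraMap K _ (w i j) := by
    ext σ τ : 1
    rcases eq_or_ne σ τ with rfl | hστ <;> simp [F, ev, Matrix.algebraMap_matrix_apply, *]
  have hF_H (i : ι) : F (H i) = gaudin w 0 i := by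
    change (ev : TwistRing ι K →+* K).mapMatrix (E (H i)) = _
    rw [hH, mapMatrix_gaudin]
    simp [ev, Pi.zero_def]
  have h_matrix : F b = ∑ j, c j • (quantumLax w ^ m *ᵥ 1) j := by
    have h_map (j : ι) := map_laxMatrix_pow_mulVec (F : B →+* Matrix (Perm ι) (Perm ι) K)
      (fun i j => algebraMap (TwistRing ι K) B (scaledWeight w i j)) H m j
    simp only [RingHom.coe_coe, hF_weight, hF_H] at h_map
    simp only [b, L, map_sum, map_smul, h_map]
    rfl
  have hφ_ev : (φ : B →+* K).comp (algebraMap (TwistRing ι K) B) = ev :=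
    congrArg AlgHom.toRingHom hφ
  have h_isRoot := charpoly_isRoot_of_algHom_injective hE (φ : B →+* K) b
  rw [hφ_ev] at h_isRoot
  change (F b).charpoly.IsRoot (φ b) at h_isRoot
  rwa [h_value, h_matrix] at h_isRoot

open scoped IsMulCommutative in
theorem charpoly_quantumLax_isRoot (hw : IsClassicalYangBaxter w)
    (hp : ∀ x, (laxMatrix w p).charpoly.IsRoot x → x = 0) (c : ι → K) (m : ℕ) :
    (∑ j, c j • (quantumLax w ^ m *ᵥ 1) j).charpoly.IsRoot
      (∑ j, c j * (laxMatrix w p ^ m *ᵥ 1) j) := by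
  let G : ι → Matrix (Perm ι) (Perm ι) (TwistRing ι K) := gaudin (scaledWeight w) genericTwist
  have h_comm : ∀ x ∈ Set.range G, ∀ y ∈ Set.range G, x * y = y * x := by
    rintro _ ⟨i, rfl⟩ _ ⟨k, rfl⟩
    exact commute_gaudin (hw.map_smul Polynomial.X) genericTwist i k
  have := Algebra.isMulCommutative_adjoin (TwistRing ι K) h_comm
  let H (i : ι) : Algebra.adjoin (TwistRing ι K) (Set.range G) :=
    ⟨G i, Algebra.subset_adjoin ⟨i, rfl⟩⟩
  have h_range : Set.range H = (↑) ⁻¹' Set.range G := by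
    ext x
    exact exists_congr fun i => Subtype.ext_iff
  exact charpoly_quantumLax_isRoot_of_algHom w (H := H)
    (E := (Algebra.adjoin (TwistRing ι K) (Set.range G)).val) Subtype.val_injective (fun i => rfl)
    (by rw [h_range, Algebra.adjoin_adjoin_coe_preimage]) hp c m

end QuantumLax

/-! ### Partial fractions -/

section PartialFractions

variable {ι K : Type*} [DecidableEq ι] [Field K] {s : Finset ι} {z : ι → K}

/-- The residue of `A / Lagrange.nodal s z` at the node `z i`. -/
noncomputable def nodalResidue (s : Finset ι) (z : ι → K) (A : Polynomial K) (i : ι) : K :=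
  Lagrange.nodalWeight s z i * A.eval (z i)

theorem sum_nodalResidue_mul_nodal_erase (hz : Set.InjOn z s) {A : Polynomial K}
    (hA : A.degree < #s) :
    ∑ i ∈ s, Polynomial.C (nodalResidue s z A i) * Lagrange.nodal (s.erase i) z = A := by
  conv_rhs => rw [Lagrange.eq_interpolate hz hA, Lagrange.interpolate_apply]
  refine sum_congr rfl fun i hi => ?_
  rw [Lagrange.basis_eq_prod_sub_inv_mul_nodal_div hi, ← Lagrange.nodal_erase_eq_nodal_div hi,
    nodalResidue, map_mul]
  ring

theorem sum_nodalWeight_mul_nodal_erase (hs : s.Nonempty) (hz : Set.InjOn z s) :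
    ∑ i ∈ s, Polynomial.C (Lagrange.nodalWeight s z i) * Lagrange.nodal (s.erase i) z = 1 := by
  simpa [nodalResidue] using sum_nodalResidue_mul_nodal_erase (A := 1) hz (by simpa using hs)

theorem nodalWeight_insert_self {i : ι} (hi : i ∉ s) :
    Lagrange.nodalWeight (insert i s) z i = Lagrange.nodalWeight s z i := by
  rw [Lagrange.nodalWeight, Lagrange.nodalWeight, erase_insert hi, erase_eq_of_notMem hi]

theorem nodalWeight_insert_of_ne {i j : ι} (hj : j ∉ s) (hij : i ≠ j) :
    Lagrange.nodalWeight (insert j s) z i = cauchyWeight z i j * Lagrange.nodalWeight s z i := by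
  rw [Lagrange.nodalWeight, erase_insert_of_ne hij.symm,
    prod_insert fun h => hj (mem_of_mem_erase h)]
  rfl

theorem eval_nodal_erase_eq_cauchyWeight (hz : Set.InjOn z s) {i : ι} (hi : i ∈ s) {j : ι}
    (hj : j ∈ s) (hij : i ≠ j) :
    (Lagrange.nodal ((s.erase i).erase j) z).eval (z i) * Lagrange.nodalWeight s z i =
      cauchyWeight z i j := by
  rw [Lagrange.nodalWeight_eq_eval_nodal_erase_inv,
    Lagrange.nodal_eq_mul_nodal_erase (mem_erase.mpr ⟨hij.symm, hj⟩), Polynomial.eval_mul]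
  have h₁ : z i - z j ≠ 0 := sub_ne_zero.mpr (hz.ne hi hj hij)
  have h₂ : (Lagrange.nodal ((s.erase i).erase j) z).eval (z i) ≠ 0 := by
    refine Lagrange.eval_nodal_not_at_node fun l hl => hz.ne hi ?_ ?_
    · exact mem_of_mem_erase (mem_of_mem_erase hl)
    · exact (ne_of_mem_erase (mem_of_mem_erase hl)).symm
  simp only [cauchyWeight, Polynomial.eval_sub, Polynomial.eval_X, Polynomial.eval_C]
  field_simp

theorem eval_derivative_nodal_erase (hz : Set.InjOn z s) {i : ι} (hi : i ∈ s) {j : ι}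
    (hj : j ∈ s) :
    (Polynomial.derivative (Lagrange.nodal (s.erase j) z)).eval (z i) *
      Lagrange.nodalWeight s z i =
      (if j = i then ∑ a ∈ s, cauchyWeight z i a else 0) + cauchyWeight z i j := by
  rcases eq_or_ne j i with rfl | hij
  · rw [Lagrange.derivative_nodal, Polynomial.eval_finsetSum, sum_mul, if_pos rfl,
      cauchyWeight_self, add_zero, ← add_sum_erase s _ hi, cauchyWeight_self, zero_add]
    exact sum_congr rfl fun a ha => eval_nodal_erase_eq_cauchyWeight hz hi (mem_of_mem_erase ha)
      (ne_of_mem_erase ha).symm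
  · rw [Lagrange.eval_nodal_derivative_eval_node_eq (mem_erase.mpr ⟨hij.symm, hi⟩),
      erase_right_comm, eval_nodal_erase_eq_cauchyWeight hz hi hj hij.symm, if_neg hij, zero_add]

theorem nodalResidue_derivative (hz : Set.InjOn z s) {A : Polynomial K} (hA : A.degree < #s)
    {i : ι} (hi : i ∈ s) :
    nodalResidue s z (Polynomial.derivative A) i =
      (∑ a ∈ s, cauchyWeight z i a) * nodalResidue s z A i +
        ∑ j ∈ s, cauchyWeight z i j * nodalResidue s z A j := by
  conv_lhs => rw [nodalResidue, ← sum_nodalResidue_mul_nodal_erase hz hA]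
  simp only [Polynomial.derivative_sum, Polynomial.derivative_C_mul, Polynomial.eval_finsetSum,
    Polynomial.eval_C_mul, mul_sum]
  calc _ = ∑ j ∈ s, ((if j = i then ∑ a ∈ s, cauchyWeight z i a else 0) + cauchyWeight z i j) *
        nodalResidue s z A j := by
        refine sum_congr rfl fun j hj => ?_
        rw [← eval_derivative_nodal_erase hz hi hj]
        ring
    _ = _ := by simp [add_mul, sum_add_distrib, hi]

theorem sum_cauchyWeight_mul_nodalWeight_of_mem (hz : Set.InjOn z s) {i : ι} (hi : i ∈ s) :
    ∑ j ∈ s, cauchyWeight z i j * Lagrange.nodalWeight s z j =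
      -((∑ j ∈ s, cauchyWeight z i j) * Lagrange.nodalWeight s z i) := by
  have h := nodalResidue_derivative (A := 1) hz (by simpa using ⟨i, hi⟩) hi
  simp only [nodalResidue, Polynomial.derivative_one, Polynomial.eval_zero, mul_zero,
    Polynomial.eval_one, mul_one] at h
  linear_combination -h

theorem sum_cauchyWeight_mul_nodalWeight_of_forall_ne (hs : s.Nonempty) (hz : Set.InjOn z s)
    {i : ι} (hi : ∀ j ∈ s, z i ≠ z j) :
    ∑ j ∈ s, cauchyWeight z i j * Lagrange.nodalWeight s z j =
      ((Lagrange.nodal s z).eval (z i))⁻¹ := by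
  have h := Lagrange.eval_interpolate_not_at_node (1 : ι → K) hi
  rw [Lagrange.interpolate_one hz hs, Polynomial.eval_one] at h
  rw [← eq_inv_of_mul_eq_one_right h.symm]
  exact sum_congr rfl fun j _ => by rw [Pi.one_apply, mul_one, mul_comm, cauchyWeight]

end PartialFractions

/-! ### Bethe operators -/

section Alternator

variable (R : Type*) {ι : Type*} [CommRing R] [Fintype ι] [DecidableEq ι]

/-- The antisymmetrizer (not normalized) of the permutations supported on `X`, acting on functions
on the symmetric group. -/
def alternator (X : Finset ι) : Matrix (Perm ι) (Perm ι) R :=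
  ∑ g : Perm ι with g.support ⊆ X, Perm.sign g • rightTranslation R (Perm ι) g

theorem alternator_singleton (i : ι) : alternator R {i} = 1 := by
  have h : ({g : Perm ι | g.support ⊆ {i}} : Finset (Perm ι)) = {1} := by
    ext g
    simp only [mem_filter_univ, mem_singleton, ← Perm.card_support_le_one]
    exact ⟨fun h => card_le_card h, fun h => by simp [Perm.card_support_le_one.mp h]⟩
  rw [alternator, h]
  simp

theorem conjTranspose_alternator [StarRing R] (X : Finset ι) :
    (alternator R X)ᴴ = alternator R X := by
  rw [alternator, Matrix.conjTranspose_sum]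
  refine sum_equiv (Equiv.inv (Perm ι)) (by simp) fun g _ => ?_
  rcases Int.units_eq_one_or (Perm.sign g) with h | h <;>
    simp [h, conjTranspose_rightTranslation, Units.smul_def]

variable {R}

theorem sign_smul_rightTranslation_mul_alternator {X : Finset ι} {h : Perm ι} (hh : h.support ⊆ X) :
    Perm.sign h • (rightTranslation R (Perm ι) h * alternator R X) = alternator R X := by
  rw [alternator, mul_sum, smul_sum]
  refine sum_equiv (Equiv.mulLeft h) (fun g => ?_) fun g _ => ?_
  · simp only [mem_filter_univ, coe_mulLeft]
    refine ⟨fun hg => (Perm.support_mul_le h g).trans (union_subset hh hg), fun hg => ?_⟩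
    rw [← inv_mul_cancel_left h g]
    exact (Perm.support_mul_le _ _).trans (union_subset (by rwa [Perm.support_inv]) hg)
  · rw [coe_mulLeft, map_mul, map_mul, mul_smul_comm, smul_smul]

theorem rightTranslation_swap_mul_alternator {X : Finset ι} {i j : ι} (hij : i ≠ j) (hi : i ∈ X)
    (hj : j ∈ X) :
    rightTranslation R (Perm ι) (swap i j) * alternator R X = -alternator R X := by
  have h_swap : (swap i j).support ⊆ X := by
    rw [Perm.support_swap hij, insert_subset_iff, singleton_subset_iff]
    exact ⟨hi, hj⟩
  have h := sign_smul_rightTranslation_mul_alternator (R := R) h_swap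
  rwa [Perm.sign_swap hij, Units.neg_smul, one_smul, neg_eq_iff_eq_neg] at h

theorem support_swap_mul_subset_iff {Y : Finset ι} {i j : ι} (hi : i ∈ Y) (hj : j ∈ Y)
    (g : Perm ι) :
    (swap i j * g).support ⊆ Y ∧ (swap i j * g)⁻¹ i = j ↔ g.support ⊆ Y.erase j := by
  have h_swap : (swap i j).support ⊆ Y := fun a ha => by
    by_contra hY
    refine Perm.mem_support.mp ha (swap_apply_of_ne_of_ne ?_ ?_) <;> rintro rfl <;> contradiction
  have h_support : (swap i j * g).support ⊆ Y ↔ g.support ⊆ Y := by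
    refine ⟨fun h => ?_, fun h => (Perm.support_mul_le _ _).trans (union_subset h_swap h)⟩
    rw [← swap_mul_self_mul i j g]
    exact (Perm.support_mul_le _ _).trans (union_subset h_swap h)
  rw [h_support, subset_erase, Perm.notMem_support, Perm.inv_eq_iff_eq, Perm.mul_apply,
    ← swap_inv, Perm.eq_inv_iff_eq, swap_apply_left, eq_comm (a := j)]

theorem alternator_eq_sum_swap_mul_alternator_erase {Y : Finset ι} {i : ι} (hi : i ∈ Y) :
    alternator R Y = ∑ j ∈ Y, Perm.sign (swap i j) •
      (rightTranslation R (Perm ι) (swap i j) * alternator R (Y.erase j)) := by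
  have h_maps : ∀ g ∈ ({g | g.support ⊆ Y} : Finset (Perm ι)), g⁻¹ i ∈ Y := fun g hg => by
    by_contra h
    have h' := Perm.notMem_support.mp fun h' => h ((mem_filter_univ _).mp hg h')
    rw [← Perm.mul_apply, mul_inv_cancel, Perm.one_apply] at h'
    exact h (h' ▸ hi)
  conv_lhs => rw [alternator, ← sum_fiberwise_of_maps_to h_maps]
  refine sum_congr rfl fun j hj => ?_
  rw [alternator, mul_sum, smul_sum, filter_filter]
  refine (sum_equiv (Equiv.mulLeft (swap i j)) (fun g => ?_) fun g _ => ?_).symm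
  · simp only [mem_filter_univ, coe_mulLeft, support_swap_mul_subset_iff hi hj]
  · rw [coe_mulLeft, map_mul, map_mul, mul_smul_comm, smul_smul]

end Alternator

section BetheOperator

variable {ι K : Type*} [Fintype ι] [DecidableEq ι] [Field K] {z : ι → K}

theorem sum_powersetCard_sum_compl_insert {M : Type*} [AddCommMonoid M] (F : Finset ι → ι → M)
    (m : ℕ) : ∑ X ∈ powersetCard m univ, ∑ j ∈ Xᶜ, F (insert j X) j =
      ∑ Y ∈ powersetCard (m + 1) univ, ∑ j ∈ Y, F Y j := by
  rw [sum_sigma', sum_sigma']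
  refine sum_bij' (fun p _ => ⟨insert p.2 p.1, p.2⟩) (fun p _ => ⟨p.1.erase p.2, p.2⟩)
    ?_ ?_ ?_ ?_ fun p _ => rfl
  · rintro ⟨X, j⟩ h
    simp_all
  · rintro ⟨Y, j⟩ h
    simp_all
  · rintro ⟨X, j⟩ h
    simp_all
  · rintro ⟨Y, j⟩ h
    simp_all

theorem quantumLax_mulVec (w : ι → ι → K) (v : ι → Matrix (Perm ι) (Perm ι) K) (i : ι) :
    (quantumLax w *ᵥ v) i = ∑ j, w i j • v j -
      ∑ j, w i j • (rightTranslation K (Perm ι) (swap i j) * v i) := by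
  have h_twist : diagonalTwist (0 : ι → K) i = 0 := Matrix.diagonal_zero
  simp only [quantumLax, laxMatrix_mulVec, gaudin, h_twist, zero_sub, neg_mul, sum_mul,
    smul_mul_assoc, ← Algebra.smul_def]
  abel

theorem quantumLax_mulVec_smul_alternator (hz : Function.Injective z) {X : Finset ι}
    (hX : X.Nonempty) (i : ι) :
    (quantumLax (cauchyWeight z) *ᵥ fun j =>
      if j ∈ X then Lagrange.nodalWeight X z j • alternator K X else 0) i =
    ∑ j ∈ Xᶜ, if i ∈ insert j X then
      Lagrange.nodalWeight (insert j X) z i •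
        (Perm.sign (swap i j) • (rightTranslation K (Perm ι) (swap i j) * alternator K X))
      else 0 := by
  have h_potential : ∑ j, cauchyWeight z i j •
      (if j ∈ X then Lagrange.nodalWeight X z j • alternator K X else 0) =
      (∑ j ∈ X, cauchyWeight z i j * Lagrange.nodalWeight X z j) • alternator K X := by
    simp only [smul_ite, smul_zero, sum_ite_mem, univ_inter, smul_smul, sum_smul]
  rw [quantumLax_mulVec, h_potential]
  by_cases hi : i ∈ X
  · have h_inside : ∑ j ∈ X, cauchyWeight z i j • (rightTranslation K (Perm ι) (swap i j) *
        Lagrange.nodalWeight X z i • alternator K X) =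
        (∑ j ∈ X, cauchyWeight z i j * Lagrange.nodalWeight X z j) • alternator K X := by
      rw [sum_cauchyWeight_mul_nodalWeight_of_mem hz.injOn hi, sum_mul, ← sum_neg_distrib, sum_smul]
      refine sum_congr rfl fun j hj => ?_
      rcases eq_or_ne i j with rfl | hij
      · simp [cauchyWeight_self]
      rw [mul_smul_comm, rightTranslation_swap_mul_alternator hij hi hj, smul_smul, smul_neg,
        neg_smul]
    rw [if_pos hi, ← sum_add_sum_compl X, h_inside, sub_add_cancel_left, ← sum_neg_distrib]
    refine sum_congr rfl fun j hj => ?_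
    have hij : i ≠ j := fun h => mem_compl.mp hj (h ▸ hi)
    rw [if_pos (mem_insert_of_mem hi), nodalWeight_insert_of_ne (mem_compl.mp hj) hij,
      Perm.sign_swap hij, Units.neg_smul, one_smul, mul_smul_comm, smul_smul, smul_neg]
  · have h_only (j : ι) (hji : j ≠ i) : i ∉ insert j X := by
      simp [hi, hji.symm]
    rw [if_neg hi, sum_eq_single_of_mem i (mem_compl.mpr hi) fun j _ hji =>
      if_neg (h_only j hji)]
    rw [sum_cauchyWeight_mul_nodalWeight_of_forall_ne hX hz.injOn fun j hj =>
      hz.ne (ne_of_mem_of_not_mem hj hi).symm, nodalWeight_insert_self hi,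
      Lagrange.nodalWeight_eq_eval_nodal_erase_inv, erase_eq_of_notMem hi,
      if_pos (mem_insert_self i X), show swap i i = 1 from swap_self i, map_one, map_one, one_mul,
      one_smul]
    simp only [mul_zero, smul_zero, sum_const_zero, sub_zero]

theorem quantumLax_pow_mulVec_one (hz : Function.Injective z) (m : ℕ) :
    quantumLax (cauchyWeight z) ^ m *ᵥ 1 = ∑ X ∈ powersetCard (m + 1) univ, fun i =>
      if i ∈ X then Lagrange.nodalWeight X z i • alternator K X else 0 := by
  induction m with
  | zero =>
    ext1 i
    simp [powersetCard_one, Lagrange.nodalWeight, alternator_singleton]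
  | succ m ih =>
    rw [pow_succ', ← Matrix.mulVec_mulVec, ih, Matrix.mulVec_sum]
    ext1 i
    rw [Finset.sum_apply, Finset.sum_apply]
    calc _ = ∑ X ∈ powersetCard (m + 1) univ, ∑ j ∈ Xᶜ, if i ∈ insert j X then
            Lagrange.nodalWeight (insert j X) z i • (Perm.sign (swap i j) •
              (rightTranslation K (Perm ι) (swap i j) * alternator K ((insert j X).erase j)))
            else 0 := by
          refine sum_congr rfl fun X hX => ?_
          have hX' : X.Nonempty := card_pos.mp (by simp [mem_powersetCard_univ.mp hX])
          rw [quantumLax_mulVec_smul_alternator hz hX']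
          refine sum_congr rfl fun j hj => ?_
          rw [erase_insert (mem_compl.mp hj)]
      _ = _ := by
          rw [sum_powersetCard_sum_compl_insert fun Y j => if i ∈ Y then
            Lagrange.nodalWeight Y z i • (Perm.sign (swap i j) •
              (rightTranslation K (Perm ι) (swap i j) * alternator K (Y.erase j))) else 0]
          refine sum_congr rfl fun Y _ => ?_
          split_ifs with hi
          · rw [← smul_sum, ← alternator_eq_sum_swap_mul_alternator_erase hi]
          · exact sum_const_zero

/-- The `(m + 1)`-st Bethe operator of the Gaudin model on the regular representation, at the
spectral parameter `x`. -/
noncomputable def betheOperator (m : ℕ) (x : K) (z : ι → K) : Matrix (Perm ι) (Perm ι) K :=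
  ∑ X ∈ powersetCard (m + 1) univ, (∏ l ∈ Xᶜ, (x - z l)) • alternator K X

theorem sum_smul_quantumLax_pow_mulVec_one (hz : Function.Injective z) (m : ℕ) (x : K) :
    ∑ j, (Lagrange.nodal (univ.erase j) z).eval x •
      (quantumLax (cauchyWeight z) ^ m *ᵥ 1) j = betheOperator m x z := by
  simp only [quantumLax_pow_mulVec_one hz, Finset.sum_apply, smul_sum]
  rw [sum_comm, betheOperator]
  refine sum_congr rfl fun X hX => ?_
  have hX' : X.Nonempty := card_pos.mp (by simp [mem_powersetCard_univ.mp hX])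
  have h_unity := congrArg (Polynomial.eval x) (sum_nodalWeight_mul_nodal_erase hX' hz.injOn)
  simp only [Polynomial.eval_finsetSum, Polynomial.eval_mul, Polynomial.eval_C,
    Polynomial.eval_one] at h_unity
  have h_erase (j : ι) (hj : j ∈ X) : univ.erase j = Xᶜ.disjUnion (X.erase j)
      (disjoint_compl_left.mono_right (erase_subset j X)) := by
    ext a
    by_cases a = j <;> by_cases a ∈ X <;> simp_all
  have h_nodal (j : ι) (hj : j ∈ X) : (Lagrange.nodal (univ.erase j) z).eval x =
      (∏ l ∈ Xᶜ, (x - z l)) * (Lagrange.nodal (X.erase j) z).eval x := by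
    rw [h_erase j hj, Lagrange.eval_nodal, prod_disjUnion, Lagrange.eval_nodal]
  simp only [smul_ite, smul_zero, sum_ite_mem, univ_inter, smul_smul, ← sum_smul]
  congr 1
  calc _ = ∑ j ∈ X, (∏ l ∈ Xᶜ, (x - z l)) *
        (Lagrange.nodalWeight X z j * (Lagrange.nodal (X.erase j) z).eval x) :=
        sum_congr rfl fun j hj => by rw [h_nodal j hj]; ring
    _ = _ := by rw [← mul_sum, h_unity, mul_one]

theorem charpoly_betheOperator_isRoot [IsAlgClosed K] (hz : Function.Injective z) {p : ι → K}
    (hp : ∀ x, (laxMatrix (cauchyWeight z) p).charpoly.IsRoot x → x = 0) (m : ℕ) (x : K) :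
    (betheOperator m x z).charpoly.IsRoot (∑ j, (Lagrange.nodal (univ.erase j) z).eval x *
      (laxMatrix (cauchyWeight z) p ^ m *ᵥ 1) j) := by
  rw [← sum_smul_quantumLax_pow_mulVec_one hz]
  exact charpoly_quantumLax_isRoot _ (isClassicalYangBaxter_cauchyWeight hz) hp _ m

end BetheOperator

section Hermitian

variable {ι : Type*} [Fintype ι] [DecidableEq ι]

theorem isHermitian_betheOperator (m : ℕ) {x : ℂ} (hx : x.im = 0) {z : ι → ℂ}
    (hz : ∀ i, (z i).im = 0) : (betheOperator m x z).IsHermitian := by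
  rw [Matrix.IsHermitian, betheOperator, Matrix.conjTranspose_sum]
  refine sum_congr rfl fun X _ => ?_
  rw [Matrix.conjTranspose_smul, conjTranspose_alternator, star_prod]
  congr 1
  refine prod_congr rfl fun l _ => ?_
  rw [star_sub]
  exact congrArg₂ _ (Complex.conj_eq_iff_im.mpr hx) (Complex.conj_eq_iff_im.mpr (hz l))

theorem im_eq_zero_of_charpoly_isRoot {A : Matrix ι ι ℂ} (hA : A.IsHermitian) {a : ℂ}
    (ha : A.charpoly.IsRoot a) : a.im = 0 := by
  rw [hA.charpoly_eq, Polynomial.IsRoot, Polynomial.eval_prod, prod_eq_zero_iff] at ha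
  obtain ⟨i, -, hi⟩ := ha
  simp only [Polynomial.eval_sub, Polynomial.eval_X, Polynomial.eval_C, sub_eq_zero] at hi
  simp [hi]

theorem continuous_eval_charpoly_betheOperator (m : ℕ) (x : ℂ) :
    Continuous fun q : ℂ × (ι → ℂ) => (betheOperator m x q.2).charpoly.eval q.1 := by
  simp_rw [Matrix.eval_charpoly]
  refine Continuous.matrix_det (Continuous.sub ?_ ?_)
  · exact (Continuous.matrix_diagonal (continuous_pi fun _ => continuous_fst))
  · unfold betheOperator
    fun_prop

end Hermitian

/-! ### Local recursions -/

theorem eq_zero_of_isIdempotentElem_of_trace_eq_zero {ι K : Type*} [Fintype ι] [Field K]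
    [CharZero K] {E : Matrix ι ι K}
    (hE : IsIdempotentElem E) (h_trace : E.trace = 0) : E = 0 := by
  classical
  have h : IsIdempotentElem (Matrix.toLin' E) := by
    rw [IsIdempotentElem, Module.End.mul_eq_comp, ← Matrix.toLin'_mul, hE.eq]
  exact Matrix.toLin'.map_eq_zero_iff.mp
    (LinearMap.IsIdempotentElem.eq_zero_of_trace_eq_zero h
    (by rw [Matrix.trace_toLin'_eq, h_trace]))

section Nilpotent

variable {ι K : Type*} [Fintype ι] [DecidableEq ι] [Field K]

theorem trace_aeval_eq_zero_of_X_pow_dvd {L : Matrix ι ι K} {k : ℕ}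
    (hL : ∀ m, k ≤ m → (L ^ m).trace = 0) {q : Polynomial K} (hq : Polynomial.X ^ k ∣ q) :
    (Polynomial.aeval L q).trace = 0 := by
  obtain ⟨q, rfl⟩ := hq
  induction q using Polynomial.induction_on' with
  | add p q hp hq => rw [mul_add, map_add, Matrix.trace_add, hp, hq, add_zero]
  | monomial m a =>
    rw [Polynomial.X_pow_mul_monomial, Polynomial.aeval_monomial, ← Algebra.smul_def,
      Matrix.trace_smul, hL _ (Nat.le_add_left k m), smul_zero]

theorem isNilpotent_of_forall_trace_pow_eq_zero [CharZero K] {L : Matrix ι ι K} {k : ℕ}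
    (hL : ∀ m, k ≤ m → (L ^ m).trace = 0) : IsNilpotent L := by
  obtain ⟨r, hr, hX⟩ := Polynomial.exists_eq_pow_rootMultiplicity_mul_and_not_dvd L.charpoly
    L.charpoly_monic.ne_zero 0
  set a := L.charpoly.rootMultiplicity 0
  rw [map_zero, sub_zero] at hr hX
  have h_annihilates : Polynomial.aeval L (Polynomial.X ^ a * r) = 0 := by
    rw [← hr, Matrix.aeval_self_charpoly]
  obtain ⟨u, v, huv⟩ : IsCoprime ((Polynomial.X : Polynomial K) ^ (a + k)) r :=
    (Polynomial.irreducible_X.coprime_iff_not_dvd.mpr hX).pow_left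
  -- `aeval L q` projects onto the sum of the eigenspaces of nonzero eigenvalues.
  let q : Polynomial K := u * Polynomial.X ^ (a + k)
  have hq : q = 1 - v * r := eq_sub_of_add_eq huv
  have h_idempotent : IsIdempotentElem (Polynomial.aeval L q) := by
    have h : q * q = q - u * Polynomial.X ^ k * v * (Polynomial.X ^ a * r) := by
      nth_rw 2 [hq]
      simp only [q]
      ring
    rw [IsIdempotentElem, ← map_mul, h, map_sub, map_mul _ _ (_ * r), h_annihilates, mul_zero,
      sub_zero]
  have h_zero : Polynomial.aeval L q = 0 :=
    eq_zero_of_isIdempotentElem_of_trace_eq_zero h_idempotent <|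
      trace_aeval_eq_zero_of_X_pow_dvd hL <| (pow_dvd_pow _ (Nat.le_add_left k a)).mul_left u
  have h_pow : (Polynomial.X : Polynomial K) ^ a =
      Polynomial.X ^ a * q + v * (Polynomial.X ^ a * r) := by
    rw [hq]
    ring
  refine ⟨a, ?_⟩
  simpa [h_annihilates, h_zero, map_mul _ v] using congrArg (Polynomial.aeval L) h_pow

theorem eq_zero_of_charpoly_isRoot_of_isNilpotent {L : Matrix ι ι K} (hL : IsNilpotent L) {x : K}
    (hx : L.charpoly.IsRoot x) : x = 0 := by
  have h := (Matrix.isNilpotent_charpoly_sub_pow_of_isNilpotent hL).eq_zero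
  rw [sub_eq_zero.mp h, Polynomial.IsRoot, Polynomial.eval_pow, Polynomial.eval_X] at hx
  exact eq_zero_of_pow_eq_zero hx

end Nilpotent

section Recursion

variable {ι K : Type*} [Fintype ι] [DecidableEq ι] [Field K] {z : ι → K}

theorem laxMatrix_commutator (hz : Function.Injective z) (p : ι → K) :
    Matrix.diagonal z * laxMatrix (cauchyWeight z) p -
      laxMatrix (cauchyWeight z) p * Matrix.diagonal z = Matrix.of (fun _ _ => 1) - 1 := by
  ext i j
  rcases eq_or_ne i j with rfl | hij
  · simp [laxMatrix, cauchyWeight]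
    ring
  · have : z i - z j ≠ 0 := sub_ne_zero.mpr (hz.ne hij)
    simp [laxMatrix, cauchyWeight, hij]
    field_simp

theorem isNilpotent_laxMatrix [CharZero K] (hz : Function.Injective z) {p : ι → K} {k : ℕ}
    (hk : laxMatrix (cauchyWeight z) p ^ k *ᵥ 1 = 0) :
    IsNilpotent (laxMatrix (cauchyWeight z) p) := by
  set L := laxMatrix (cauchyWeight z) p with hL
  refine isNilpotent_of_forall_trace_pow_eq_zero (k := k) fun m hkm => ?_
  have h_pow : L ^ m *ᵥ 1 = 0 := by
    rw [← Nat.sub_add_cancel hkm, pow_add, ← Matrix.mulVec_mulVec, hk, Matrix.mulVec_zero]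
  have h_ones : (Matrix.of (fun _ _ => (1 : K)) * L ^ m).trace = 0 := by
    rw [Matrix.trace_mul_comm]
    refine sum_eq_zero fun i _ => ?_
    simpa [Matrix.mul_apply, Matrix.mulVec, dotProduct] using congrFun h_pow i
  calc (L ^ m).trace
      = (Matrix.of (fun _ _ => (1 : K)) * L ^ m).trace -
          ((Matrix.of (fun _ _ => (1 : K)) - 1) * L ^ m).trace := by
        rw [sub_mul, Matrix.trace_sub, one_mul, sub_sub_cancel]
    _ = -((Matrix.diagonal z * L - L * Matrix.diagonal z) * L ^ m).trace := by
        rw [h_ones, zero_sub, hL, laxMatrix_commutator hz]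
    _ = 0 := by
        rw [sub_mul, Matrix.trace_sub, mul_assoc, (Commute.self_pow L m).eq, ← mul_assoc,
          Matrix.trace_mul_comm, ← mul_assoc, sub_self, neg_zero]

theorem nodalResidue_recursion (hz : Function.Injective z) {A B : Polynomial K}
    (hA : A.degree < Fintype.card ι) {κ : ι → K}
    (hB : ∀ i, B.eval (z i) = (Polynomial.derivative A).eval (z i) - κ i * A.eval (z i)) :
    nodalResidue univ z B = laxMatrix (cauchyWeight z) (fun i => ∑ a, cauchyWeight z i a - κ i) *ᵥ
      nodalResidue univ z A := by
  ext i
  have h := nodalResidue_derivative (s := univ) hz.injOn (by simpa using hA) (mem_univ i)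
  rw [laxMatrix_mulVec, sub_mul]
  simp only [nodalResidue] at h ⊢
  rw [hB]
  linear_combination h

theorem nodalResidue_derivative_nodal (hz : Function.Injective z) :
    nodalResidue univ z (Polynomial.derivative (Lagrange.nodal univ z)) = 1 := by
  ext i
  rw [nodalResidue, Lagrange.nodalWeight_eq_eval_derivative_nodal (mem_univ i)]
  refine inv_mul_cancel₀ ?_
  rw [Lagrange.eval_nodal_derivative_eval_node_eq (mem_univ i)]
  exact Lagrange.eval_nodal_not_at_node fun l hl => hz.ne (ne_of_mem_erase hl).symm

theorem charpoly_betheOperator_isRoot_of_recursion [IsAlgClosed K] [CharZero K]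
    (hz : Function.Injective z) {k : ℕ} {A : ℕ → Polynomial K}
    (hA_zero : A 0 = Polynomial.derivative (Lagrange.nodal univ z)) (hAk : A k = 0)
    (hA_degree : ∀ m, (A m).degree < Fintype.card ι)
    (hA_succ : ∀ i, ∃ κ, ∀ m < k, (A (m + 1)).eval (z i) =
      (Polynomial.derivative (A m)).eval (z i) - κ * (A m).eval (z i)) {m : ℕ} (hm : m ≤ k)
    (x : K) : (betheOperator m x z).charpoly.IsRoot ((A m).eval x) := by
  choose κ hκ using hA_succ
  set L := laxMatrix (cauchyWeight z) fun i => ∑ a, cauchyWeight z i a - κ i with hL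
  have h_residue : ∀ m ≤ k, nodalResidue univ z (A m) = L ^ m *ᵥ 1 := by
    intro m
    induction m with
    | zero =>
      intro _
      rw [hA_zero, nodalResidue_derivative_nodal hz, pow_zero, Matrix.one_mulVec]
    | succ m ih =>
      intro hm
      rw [nodalResidue_recursion hz (hA_degree m) fun i => hκ i m hm, ih (Nat.le_of_succ_le hm),
        Matrix.mulVec_mulVec, pow_succ']
  have hL_nilpotent : IsNilpotent L := by
    refine isNilpotent_laxMatrix hz (k := k) ?_
    rw [← hL, ← h_residue k le_rfl, hAk]
    ext i
    simp [nodalResidue]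
  have h_root := charpoly_betheOperator_isRoot hz
    (fun _ => eq_zero_of_charpoly_isRoot_of_isNilpotent hL_nilpotent) m x
  rw [← hL, ← h_residue m hm] at h_root
  convert h_root using 1
  have h_expand := sum_nodalResidue_mul_nodal_erase (s := univ) hz.injOn
    (by simpa using hA_degree m)
  conv_lhs => rw [← h_expand]
  simp only [Polynomial.eval_finsetSum, Polynomial.eval_C_mul]
  exact sum_congr rfl fun _ _ => mul_comm _ _

end Recursion

/-! ### Wronskian differential operators -/

section WronskianMinor

open Polynomial

variable {ι R : Type*} [Fintype ι] [DecidableEq ι] [CommRing R]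

theorem derivative_det (M : Matrix ι ι R[X]) :
    derivative M.det = ∑ i, (M.updateRow i fun b => derivative (M i b)).det := by
  simp_rw [← Matrix.det_transpose M, ← Matrix.det_transpose (M.updateRow _ _), Matrix.det_apply]
  rw [Finset.sum_comm, derivative_sum]
  refine Finset.sum_congr rfl fun σ _ => ?_
  rw [derivative_smul, derivative_prod_finset, ← Finset.smul_sum]
  congr 1
  refine Finset.sum_congr rfl fun i _ => ?_
  rw [← Finset.mul_prod_erase univ _ (mem_univ i), mul_comm]
  congr 1
  · simp
  · refine Finset.prod_congr rfl fun l hl => ?_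
    simp [Matrix.updateRow_ne (Finset.ne_of_mem_erase hl)]

/-- The determinant of the derivatives of orders `e` of the polynomials `g`: a maximal minor of
the matrix of all derivatives of `g`. -/
noncomputable def wronskianMinor (e : ι → ℕ) (g : ι → R[X]) : R[X] :=
  Matrix.det (Matrix.of fun a b => derivative^[e a] (g b))

theorem wronskianMinor_eq_zero {e : ι → ℕ} (he : ¬ Function.Injective e) (g : ι → R[X]) :
    wronskianMinor e g = 0 := by
  obtain ⟨i, j, hij, hne⟩ : ∃ i j, e i = e j ∧ i ≠ j := by
    simpa [Function.Injective] using he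
  exact Matrix.det_zero_of_row_eq hne (by ext b : 1; simp [hij])

theorem derivative_wronskianMinor (e : ι → ℕ) (g : ι → R[X]) :
    derivative (wronskianMinor e g) =
      ∑ i, wronskianMinor (Function.update e i (e i + 1)) g := by
  rw [wronskianMinor, derivative_det]
  refine Finset.sum_congr rfl fun i _ => congrArg Matrix.det ?_
  ext a b : 2
  obtain rfl | ha := eq_or_ne a i
  · simp [Function.iterate_succ_apply']
  · simp [ha]

theorem eval_wronskianMinor (e : ι → ℕ) (g : ι → R[X]) (x : R) :
    (wronskianMinor e g).eval x =
      Matrix.det (Matrix.of fun a b => (derivative^[e a] (g b)).eval x) := by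
  rw [← coe_evalRingHom, wronskianMinor, RingHom.map_det]
  rfl

end WronskianMinor

section WronskianCoeff

open Polynomial

variable {k : ℕ}

theorem Wr_eq_wronskianMinor (g : Fin k → ℂ[X]) :
    Wr g = wronskianMinor (fun a : Fin k => (a : ℕ)) g :=
  rfl

/-- The coefficient of the `j`-th derivative in the differential operator `F ↦ Wr (g, F)`. -/
noncomputable def wronskianCoeff (g : Fin k → ℂ[X]) (j : Fin (k + 1)) : ℂ[X] :=
  (-1) ^ ((j : ℕ) + k) * wronskianMinor (fun a => (j.succAbove a : ℕ)) g

theorem Wr_snoc (g : Fin k → ℂ[X]) (F : ℂ[X]) :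
    Wr (Fin.snoc g F : Fin (k + 1) → ℂ[X]) =
      ∑ j, wronskianCoeff g j * derivative^[(j : ℕ)] F := by
  rw [Wr, Matrix.det_succ_column _ (Fin.last k)]
  refine Finset.sum_congr rfl fun j _ => ?_
  have hminor : (Matrix.of fun i j : Fin (k + 1) => derivative^[(i : ℕ)]
      ((Fin.snoc g F : Fin (k + 1) → ℂ[X]) j)).submatrix j.succAbove (Fin.last k).succAbove =
      Matrix.of fun a b => derivative^[(j.succAbove a : ℕ)] (g b) := by
    ext a b : 2
    simp
  rw [hminor, wronskianCoeff, wronskianMinor]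
  simp only [Matrix.of_apply, Fin.snoc_last, Fin.val_last]
  ring

theorem sum_wronskianCoeff_mul_iterate_derivative (g : Fin k → ℂ[X]) (b : Fin k) :
    ∑ j, wronskianCoeff g j * derivative^[(j : ℕ)] (g b) = 0 := by
  rw [← Wr_snoc, Wr]
  exact Matrix.det_zero_of_column_eq (Fin.castSucc_lt_last b).ne fun i => by simp

theorem wronskianCoeff_last (g : Fin k → ℂ[X]) : wronskianCoeff g (Fin.last k) = Wr g := by
  simp [wronskianCoeff, Wr_eq_wronskianMinor, ← two_mul]

theorem wronskianCoeff_castSucc_last (g : Fin (k + 1) → ℂ[X]) :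
    wronskianCoeff g (Fin.last k).castSucc = -derivative (Wr g) := by
  have hsign : (-1 : ℂ[X]) ^ (((Fin.last k).castSucc : ℕ) + (k + 1)) = -1 :=
    Odd.neg_one_pow ⟨k, by simp; ring⟩
  rw [wronskianCoeff, hsign, neg_one_mul, Wr_eq_wronskianMinor, derivative_wronskianMinor,
    Fintype.sum_eq_single (Fin.last k)]
  · congr 2
    ext1 a
    induction a using Fin.lastCases with
    | last => simp
    | cast a =>
      rw [Function.update_of_ne (Fin.castSucc_lt_last a).ne]
      simp [Fin.succAbove_castSucc_of_lt _ _ (Fin.castSucc_lt_last a)]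
  · refine Fin.lastCases (fun h => absurd rfl h) fun i _ =>
      wronskianMinor_eq_zero (fun h => i.castSucc_lt_succ.ne (h ?_)) g
    simp [Function.update_of_ne i.castSucc_lt_succ.ne']

theorem sum_derivative_wronskianCoeff_mul (g : Fin k → ℂ[X]) {z : ℂ}
    (hz : (Wr g).IsRoot z) (b : Fin k) :
    ∑ j : Fin (k + 1), ((derivative (wronskianCoeff g j)).eval z +
      ((Fin.cons 0 fun i => wronskianCoeff g i.castSucc : Fin (k + 1) → ℂ[X]) j).eval z) *
      (derivative^[(j : ℕ)] (g b)).eval z = 0 := by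
  have h := congrArg (fun p => (derivative p).eval z)
    (sum_wronskianCoeff_mul_iterate_derivative g b)
  simp only [derivative_sum, derivative_mul, eval_finsetSum, eval_add, eval_mul,
    Finset.sum_add_distrib, map_zero, eval_zero, ← Function.iterate_succ_apply'] at h
  rw [Fin.sum_univ_castSucc (fun j : Fin (k + 1) => (wronskianCoeff g j).eval z * _),
    wronskianCoeff_last, hz.eq_zero, zero_mul, add_zero] at h
  simp only [add_mul, Finset.sum_add_distrib]
  rw [← h]
  congr 1
  rw [Fin.sum_univ_succ]
  simp

theorem exists_eq_mul_of_vecMul_eq_zero {K : Type*} [Field K] {B : Matrix (Fin (k + 1)) (Fin k) K}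
    {u v : Fin (k + 1) → K} {p : Fin (k + 1)} (hu : u p ≠ 0)
    (hB : (B.submatrix p.succAbove id).det ≠ 0) (hBu : u ᵥ* B = 0) (hBv : v ᵥ* B = 0) :
    ∃ κ, ∀ j, v j = κ * u j := by
  set w := v - (v p / u p) • u with hw
  have hwp : w p = 0 := by simp [hw, hu]
  have hBw : w ᵥ* B = 0 := by
    rw [hw, Matrix.sub_vecMul, Matrix.smul_vecMul, hBu, hBv, smul_zero, sub_zero]
  have hrest : (fun a => w (p.succAbove a)) = 0 := by
    refine Matrix.eq_zero_of_vecMul_eq_zero hB ?_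
    rw [← hBw]
    ext b
    simp [Matrix.vecMul, dotProduct, Fin.sum_univ_succAbove _ p, hwp]
  refine ⟨v p / u p, fun j => sub_eq_zero.1 (?_ : w j = 0)⟩
  rcases Fin.eq_self_or_eq_succAbove p j with rfl | ⟨a, rfl⟩
  · exact hwp
  · exact congrFun hrest a

-- Differentiating `∑ a_j D^j (g b) = 0` at a root of the leading coefficient gives a second linear
-- relation among the values of the derivatives of `g`; at a simple root these satisfy only one.
theorem exists_derivative_wronskianCoeff_add_eq_mul (g : Fin (k + 1) → ℂ[X]) {z : ℂ}
    (hz : (Wr g).IsRoot z) (hz' : (derivative (Wr g)).eval z ≠ 0) :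
    ∃ κ, ∀ j : Fin (k + 2), (derivative (wronskianCoeff g j)).eval z +
      ((Fin.cons 0 fun i => wronskianCoeff g i.castSucc : Fin (k + 2) → ℂ[X]) j).eval z =
        κ * (wronskianCoeff g j).eval z := by
  have hne : (wronskianCoeff g (Fin.last k).castSucc).eval z ≠ 0 := by
    rwa [wronskianCoeff_castSucc_last, eval_neg, neg_ne_zero]
  refine exists_eq_mul_of_vecMul_eq_zero (u := fun j => (wronskianCoeff g j).eval z)
    (B := Matrix.of fun j b => (derivative^[(j : ℕ)] (g b)).eval z) hne ?_ ?_ ?_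
  · rw [wronskianCoeff, eval_mul, eval_wronskianMinor] at hne
    exact right_ne_zero_of_mul hne
  · ext b
    simpa [Matrix.vecMul, dotProduct, eval_finsetSum] using
      congrArg (eval z) (sum_wronskianCoeff_mul_iterate_derivative g b)
  · ext b
    exact sum_derivative_wronskianCoeff_mul g hz b

/-- The coefficients of `F ↦ Wr (g, F)` in order of decreasing differentiation, starting below the
leading one and continued by zero. -/
noncomputable def wronskianTail (g : Fin (k + 1) → ℂ[X]) (m : ℕ) : ℂ[X] :=
  if h : m < k + 1 then wronskianCoeff g (Fin.rev ⟨m, h⟩).castSucc else 0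

theorem wronskianTail_rev (g : Fin (k + 1) → ℂ[X]) (j : Fin (k + 1)) :
    wronskianTail g j.rev = wronskianCoeff g j.castSucc := by
  rw [wronskianTail, dif_pos j.rev.isLt, Fin.eta, Fin.rev_rev]

theorem wronskianTail_eq_zero (g : Fin (k + 1) → ℂ[X]) : wronskianTail g (k + 1) = 0 := by
  simp [wronskianTail]

theorem wronskianTail_zero (g : Fin (k + 1) → ℂ[X]) :
    wronskianTail g 0 = -derivative (Wr g) := by
  simpa [wronskianCoeff_castSucc_last] using wronskianTail_rev g (Fin.last k)

theorem wronskianTail_rev_add_one (g : Fin (k + 1) → ℂ[X]) (j : Fin (k + 1)) :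
    wronskianTail g (j.rev + 1) =
      (Fin.cons 0 fun i => wronskianCoeff g i.castSucc : Fin (k + 2) → ℂ[X]) j.castSucc := by
  induction j using Fin.cases with
  | zero => simp [wronskianTail]
  | succ i =>
    rw [← Fin.succ_castSucc, Fin.cons_succ, ← wronskianTail_rev]
    congr 1
    simp [Fin.val_rev]
    omega

theorem exists_wronskianTail_succ_eval (g : Fin (k + 1) → ℂ[X]) {z : ℂ}
    (hz : (Wr g).IsRoot z) (hz' : (derivative (Wr g)).eval z ≠ 0) :
    ∃ κ, ∀ m < k + 1, (wronskianTail g (m + 1)).eval z =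
      κ * (wronskianTail g m).eval z - (derivative (wronskianTail g m)).eval z := by
  obtain ⟨κ, hκ⟩ := exists_derivative_wronskianCoeff_add_eq_mul g hz hz'
  refine ⟨κ, fun m hm => ?_⟩
  obtain ⟨j, rfl⟩ : ∃ j : Fin (k + 1), m = j.rev := ⟨Fin.rev ⟨m, hm⟩, by simp⟩
  rw [wronskianTail_rev_add_one, wronskianTail_rev]
  linear_combination hκ j.castSucc

end WronskianCoeff

/-! ### Degrees and leading coefficients of Wronskians -/

section Degree

open Polynomial

variable {ι R : Type*} [CommRing R]

theorem coeff_prod_sum_of_natDegree_le (s : Finset ι) {p : ι → R[X]} {d : ι → ℕ}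
    (h : ∀ i, (p i).natDegree ≤ d i) :
    (∏ i ∈ s, p i).coeff (∑ i ∈ s, d i) = ∏ i ∈ s, (p i).coeff (d i) := by
  classical
  induction s using Finset.induction_on with
  | empty => simp
  | insert a s ha ih =>
    rw [Finset.prod_insert ha, Finset.sum_insert ha, Finset.prod_insert ha, ← ih]
    exact coeff_mul_add_eq_of_natDegree_le (h a)
      ((natDegree_prod_le s p).trans (Finset.sum_le_sum fun i _ => h i))

theorem coeff_X_pow_mul_iterate_derivative (p : R[X]) (i N : ℕ) :
    (X ^ i * derivative^[i] p).coeff N = (N.descFactorial i : R) * p.coeff N := by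
  rw [coeff_X_pow_mul']
  split_ifs with h
  · rw [coeff_iterate_derivative, Nat.sub_add_cancel h, nsmul_eq_mul]
  · rw [Nat.descFactorial_eq_zero_iff_lt.2 (not_le.1 h), Nat.cast_zero, zero_mul]

theorem natDegree_X_pow_mul_iterate_derivative_le (p : R[X]) (i : ℕ) :
    (X ^ i * derivative^[i] p).natDegree ≤ p.natDegree := by
  refine natDegree_le_iff_coeff_eq_zero.2 fun N hN => ?_
  rw [coeff_X_pow_mul_iterate_derivative, coeff_eq_zero_of_natDegree_lt hN, mul_zero]

variable [Fintype ι] [DecidableEq ι]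

theorem natDegree_det_le_sum {M : Matrix ι ι R[X]} {d : ι → ℕ}
    (h : ∀ i b, (M i b).natDegree ≤ d b) : M.det.natDegree ≤ ∑ b, d b := by
  rw [Matrix.det_apply]
  refine natDegree_sum_le_of_forall_le _ _ fun σ _ => (natDegree_smul_le _ _).trans ?_
  exact (natDegree_prod_le _ _).trans (Finset.sum_le_sum fun b _ => h (σ b) b)

theorem coeff_det_sum {M : Matrix ι ι R[X]} {d : ι → ℕ}
    (h : ∀ i b, (M i b).natDegree ≤ d b) :
    M.det.coeff (∑ b, d b) = (Matrix.of fun i b => (M i b).coeff (d b)).det := by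
  simp only [Matrix.det_apply, finsetSum_coeff, coeff_smul, Matrix.of_apply,
    coeff_prod_sum_of_natDegree_le univ fun b => h _ b]

theorem X_pow_sum_mul_wronskianMinor (e : ι → ℕ) (g : ι → R[X]) :
    X ^ (∑ a, e a) * wronskianMinor e g =
      Matrix.det (Matrix.of fun a b => X ^ e a * derivative^[e a] (g b)) := by
  rw [← Finset.prod_pow_eq_pow_sum]
  exact (Matrix.det_mul_column _ _).symm

variable {g : ι → R[X]} {d : ι → ℕ}

theorem degree_wronskianMinor_lt (h : ∀ b, (g b).natDegree ≤ d b) {e : ι → ℕ} {n : ℕ}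
    (hn : ∑ b, d b < n + ∑ a, e a) : (wronskianMinor e g).degree < n := by
  refine (degree_lt_iff_coeff_zero _ _).2 fun N hN => ?_
  rw [← coeff_X_pow_mul _ (∑ a, e a), X_pow_sum_mul_wronskianMinor]
  refine coeff_eq_zero_of_natDegree_lt (lt_of_le_of_lt (natDegree_det_le_sum fun a b =>
    (natDegree_X_pow_mul_iterate_derivative_le _ _).trans (h b)) (by omega))

theorem coeff_wronskianMinor (h : ∀ b, (g b).natDegree ≤ d b) {e : ι → ℕ} {n : ℕ}
    (hn : n + ∑ a, e a = ∑ b, d b) :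
    (wronskianMinor e g).coeff n =
      Matrix.det (Matrix.of fun a b => ((d b).descFactorial (e a) : R)) *
        ∏ b, (g b).coeff (d b) := by
  rw [← coeff_X_pow_mul _ (∑ a, e a), hn, X_pow_sum_mul_wronskianMinor,
    coeff_det_sum (M := Matrix.of fun a b => X ^ e a * derivative^[e a] (g b))
      fun a b => (natDegree_X_pow_mul_iterate_derivative_le _ _).trans (h b),
    mul_comm, ← Matrix.det_mul_row]
  refine congrArg Matrix.det (Matrix.ext fun a b => ?_)
  simp only [Matrix.of_apply, coeff_X_pow_mul_iterate_derivative, mul_comm]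

end Degree

theorem det_descFactorial_ne_zero {K : Type*} [Field K] [CharZero K] {k : ℕ} {d : Fin k → ℕ}
    (hd : Function.Injective d) :
    Matrix.det (Matrix.of fun i b : Fin k => ((d b).descFactorial i : K)) ≠ 0 := by
  have hvandermonde := Matrix.det_eval_matrixOfPolynomials_eq_det_vandermonde
    (fun b => (d b : K)) (fun i : Fin k => descPochhammer K i)
    (fun i => descPochhammer_natDegree _ _) (fun i => monic_descPochhammer _ _)
  simp only [descPochhammer_eval_eq_descFactorial] at hvandermonde
  rw [← Matrix.det_transpose]
  refine hvandermonde.symm.trans_ne (Matrix.det_vandermonde_ne_zero_iff.2 ?_)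
  exact Nat.cast_injective.comp hd

section WronskianDegree

open Polynomial

variable {k n : ℕ} {d : Fin k → ℕ} {g : Fin k → ℂ[X]}

theorem natDegree_Wr_le (h : ∀ b, (g b).natDegree ≤ d b)
    (hn : n + ∑ a : Fin k, (a : ℕ) = ∑ b, d b) : (Wr g).natDegree ≤ n :=
  natDegree_le_iff_degree_le.2 <| Order.lt_succ_iff.1 <|
    degree_wronskianMinor_lt (n := n + 1) h (by omega)

theorem coeff_Wr_ne_zero (hg : ∀ b, g b ≠ 0) (hinj : Function.Injective fun b => (g b).natDegree)
    (hn : n + ∑ a : Fin k, (a : ℕ) = ∑ b, (g b).natDegree) : (Wr g).coeff n ≠ 0 := by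
  rw [Wr_eq_wronskianMinor, coeff_wronskianMinor (fun _ => le_rfl) hn]
  exact mul_ne_zero (det_descFactorial_ne_zero hinj)
    (Finset.prod_ne_zero_iff.2 fun b _ => leadingCoeff_ne_zero.2 (hg b))

theorem degree_wronskianCoeff_lt (h : ∀ b, (g b).natDegree ≤ d b)
    (hn : n + ∑ a : Fin k, (a : ℕ) = ∑ b, d b) (j : Fin k) :
    (wronskianCoeff g j.castSucc).degree < n := by
  have hdegree : (wronskianCoeff g j.castSucc).degree ≤
      (wronskianMinor (fun a => (j.castSucc.succAbove a : ℕ)) g).degree := by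
    simp [wronskianCoeff]
  refine hdegree.trans_lt (degree_wronskianMinor_lt h ?_)
  have hsum := Fin.sum_univ_succAbove (fun a : Fin (k + 1) => (a : ℕ)) j.castSucc
  simp only [Fin.sum_univ_castSucc, Fin.val_castSucc, Fin.val_last] at hsum
  have := j.isLt
  omega

theorem degree_wronskianTail_lt {d : Fin (k + 1) → ℕ} {g : Fin (k + 1) → ℂ[X]}
    (h : ∀ b, (g b).natDegree ≤ d b) (hn : n + ∑ a : Fin (k + 1), (a : ℕ) = ∑ b, d b) (m : ℕ) :
    (wronskianTail g m).degree < n := by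
  rw [wronskianTail]
  split_ifs
  · exact degree_wronskianCoeff_lt h hn _
  · simp

-- The factor `-(-1) ^ m / c` turns the recursion of `wronskianTail` into the one satisfied by the
-- symbols of a monic operator, and its initial value `-W'` into `W' / c`.
theorem charpoly_betheOperator_isRoot_of_Wr_eq {d : Fin (k + 1) → ℕ} {g : Fin (k + 1) → ℂ[X]}
    (h : ∀ b, (g b).natDegree ≤ d b) (hn : n + ∑ a : Fin (k + 1), (a : ℕ) = ∑ b, d b)
    {z : Fin n → ℂ} (hz : Function.Injective z) {c : ℂ} (hc : c ≠ 0)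
    (hW : Wr g = C c * Lagrange.nodal univ z) {m : ℕ} (hm : m ≤ k + 1) (x : ℂ) :
    (betheOperator m x z).charpoly.IsRoot (-(-1) ^ m / c * (wronskianTail g m).eval x) := by
  have hroot (i : Fin n) : ∃ κ, ∀ m < k + 1, (wronskianTail g (m + 1)).eval (z i) =
      κ * (wronskianTail g m).eval (z i) - (derivative (wronskianTail g m)).eval (z i) := by
    refine exists_wronskianTail_succ_eval g ?_ ?_
    · rw [IsRoot, hW, eval_mul, Lagrange.eval_nodal_at_node (mem_univ i), mul_zero]
    · rw [hW, derivative_C_mul, eval_mul, eval_C,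
        Lagrange.eval_nodal_derivative_eval_node_eq (mem_univ i)]
      exact mul_ne_zero hc (Lagrange.eval_nodal_not_at_node fun j hj =>
        hz.ne (Finset.ne_of_mem_erase hj).symm)
  have := charpoly_betheOperator_isRoot_of_recursion hz (k := k + 1)
    (A := fun m => (-(-1) ^ m / c) • wronskianTail g m) ?_ ?_ ?_ ?_ hm x
  · simpa only [eval_smul, smul_eq_mul] using this
  · rw [pow_zero, wronskianTail_zero, hW, ← smul_eq_C_mul, derivative_smul, smul_neg, ← neg_smul,
      smul_smul, neg_div, neg_neg, one_div, inv_mul_cancel₀ hc, one_smul]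
  · rw [wronskianTail_eq_zero, smul_zero]
  · intro m
    rw [Fintype.card_fin]
    exact (degree_smul_le _ _).trans_lt (degree_wronskianTail_lt h hn m)
  · intro i
    obtain ⟨κ, hκ⟩ := hroot i
    refine ⟨κ, fun m hm => ?_⟩
    simp only [derivative_smul, eval_smul, smul_eq_mul, hκ m hm]
    ring

end WronskianDegree

/-! ### Separable perturbations -/

section Pencil

open Polynomial

variable {K : Type*} [Field K] {U W : K[X]}

theorem exists_isRoot_of_not_separable [IsAlgClosed K] {p : K[X]} (h : ¬ p.Separable) :
    ∃ z, p.IsRoot z ∧ (derivative p).IsRoot z := by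
  rw [Separable, isCoprime_iff_aeval_ne_zero_of_isAlgClosed K K] at h
  push Not at h
  simpa only [IsRoot, coe_aeval_eq_eval] using h

theorem exists_eq_C_mul_of_derivative_mul_eq [CharZero K] (hU : U.Separable)
    (h : derivative W * U = W * derivative U) : ∃ a, W = C a * U := by
  obtain ⟨q, rfl⟩ : U ∣ W := hU.dvd_of_dvd_mul_right (h ▸ dvd_mul_left _ _)
  have hq : derivative q * (U * U) = 0 := by
    rw [derivative_mul] at h
    linear_combination h
  have hq' : derivative q = 0 :=
    (mul_eq_zero.1 hq).resolve_right (mul_ne_zero hU.ne_zero hU.ne_zero)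
  exact ⟨q.coeff 0, by rw [← eq_C_of_derivative_eq_zero hq', mul_comm]⟩

theorem subsingleton_setOf_isRoot_add_C_mul (hU : U.Separable) (W : K[X]) (z : K) :
    {c | (W + C c * U).IsRoot z ∧ (derivative (W + C c * U)).IsRoot z}.Subsingleton := by
  rintro a ⟨ha, ha'⟩ b ⟨hb, hb'⟩
  simp only [IsRoot, derivative_add, derivative_C_mul, eval_add, eval_mul, eval_C]
    at ha ha' hb hb'
  obtain ⟨r, s, hrs⟩ := hU
  have hbezout := congrArg (eval z) hrs
  simp only [eval_add, eval_mul, eval_one] at hbezout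
  linear_combination (b - a) * hbezout + eval z r * (ha - hb) + eval z s * (ha' - hb')

theorem finite_setOf_not_separable_add_C_mul [IsAlgClosed K] [CharZero K] (hU : U.Separable)
    (W : K[X]) : {c | ¬ (W + C c * U).Separable}.Finite := by
  by_cases h0 : derivative W * U - W * derivative U = 0
  · obtain ⟨a, rfl⟩ := exists_eq_C_mul_of_derivative_mul_eq hU (sub_eq_zero.1 h0)
    refine (Set.finite_singleton (-a)).subset fun c hc => by_contra fun hne => hc ?_
    have hac : a + c ≠ 0 := fun h => hne (eq_neg_of_add_eq_zero_right h)
    rw [← add_mul, ← C_add]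
    exact hU.unit_mul (isUnit_C.2 hac.isUnit)
  · refine ((rootSet_finite (derivative W * U - W * derivative U) K).biUnion fun z _ =>
      (subsingleton_setOf_isRoot_add_C_mul hU W z).finite).subset fun c hc => ?_
    obtain ⟨z, h1, h2⟩ := exists_isRoot_of_not_separable hc
    refine Set.mem_biUnion ((mem_rootSet_of_ne h0).2 ?_) ⟨h1, h2⟩
    simp only [IsRoot, derivative_add, derivative_C_mul, eval_add, eval_mul, eval_C] at h1 h2
    simp only [coe_aeval_eq_eval, eval_sub, eval_mul]
    linear_combination U.eval z * h2 - (derivative U).eval z * h1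

end Pencil

section Perturbation

open Polynomial Topology

variable {k : ℕ}

theorem Wr_cons (p : ℂ[X]) (h : Fin k → ℂ[X]) :
    Wr (Fin.cons p h : Fin (k + 1) → ℂ[X]) =
      ∑ i : Fin (k + 1), (-1) ^ (i : ℕ) * derivative^[(i : ℕ)] p *
        wronskianMinor (fun a => (i.succAbove a : ℕ)) h := by
  rw [Wr, Matrix.det_succ_column_zero]
  refine Finset.sum_congr rfl fun i _ => ?_
  congr 2

theorem Wr_cons_add_C (p : ℂ[X]) (c : ℂ) (h : Fin k → ℂ[X]) :
    Wr (Fin.cons (p + C c) h : Fin (k + 1) → ℂ[X]) =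
      Wr (Fin.cons p h : Fin (k + 1) → ℂ[X]) + C c * Wr (fun b => derivative (h b)) := by
  have hminor : wronskianMinor (fun a => ((0 : Fin (k + 1)).succAbove a : ℕ)) h =
      Wr fun b => derivative (h b) := by
    simp [wronskianMinor, Wr]
  simp only [Wr_cons, Fin.sum_univ_succ, hminor]
  simp
  ring

/-- The perturbation of `g` by polynomials of degree less than `k`; the factorials make it
compatible with differentiation. -/
noncomputable def perturbation (g : Fin k → ℂ[X]) (ε : Fin k → ℂ) (b : Fin k) : ℂ[X] :=
  g b + monomial b (ε b / (b : ℕ).factorial)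

theorem perturbation_zero (g : Fin k → ℂ[X]) : perturbation g 0 = g := by
  ext1 b
  simp [perturbation]

theorem perturbation_cons (g : Fin (k + 1) → ℂ[X]) (c : ℂ) (ε : Fin k → ℂ) :
    perturbation g (Fin.cons c ε) =
      Fin.cons (g 0 + C c) fun b => g b.succ + monomial (b + 1) (ε b / (b + 1 : ℕ).factorial) := by
  refine funext (Fin.cases ?_ fun b => ?_) <;> simp [perturbation]

theorem Wr_perturbation_cons (g : Fin (k + 1) → ℂ[X]) (c : ℂ) (ε : Fin k → ℂ) :
    Wr (perturbation g (Fin.cons c ε)) = Wr (perturbation g (Fin.cons 0 ε)) +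
      C c * Wr (perturbation (fun b => derivative (g b.succ)) ε) := by
  rw [perturbation_cons, perturbation_cons, Wr_cons_add_C, C_0, add_zero]
  congr 3
  ext1 b
  rw [derivative_add, derivative_monomial, Nat.factorial_succ]
  have : ((b : ℕ) + 1 : ℂ) ≠ 0 := Nat.cast_add_one_ne_zero _
  rw [perturbation]
  congr 2
  push_cast
  field_simp

theorem frequently_separable_Wr_perturbation (g : Fin k → ℂ[X]) :
    ∃ᶠ ε in 𝓝 0, (Wr (perturbation g ε)).Separable := by
  induction k with
  | zero => exact Filter.Frequently.of_forall fun ε => by simp [Wr, separable_one]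
  | succ k ih =>
    have hcurry : ∃ᶠ q in (𝓝 (0 : Fin k → ℂ)).curry (𝓝 (0 : ℂ)),
        (Wr (perturbation g (Fin.cons q.2 q.1))).Separable := by
      refine (Filter.frequently_curry_iff _).2
        ((ih fun b => derivative (g b.succ)).mono fun ε hε => ?_)
      have hfinite := finite_setOf_not_separable_add_C_mul hε (Wr (perturbation g (Fin.cons 0 ε)))
      have heventually : ∀ᶠ c in 𝓝[≠] 0, (Wr (perturbation g (Fin.cons c ε))).Separable :=
        (hfinite.eventually_cofinite_notMem.filter_mono (nhdsNE_le_cofinite 0)).mono fun c hc => by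
          rw [Wr_perturbation_cons]
          exact not_not.1 hc
      exact heventually.frequently.filter_mono nhdsWithin_le_nhds
    have hcons : Filter.Tendsto (fun q : (Fin k → ℂ) × ℂ => (Fin.cons q.2 q.1 : Fin (k + 1) → ℂ))
        (𝓝 0 ×ˢ 𝓝 0) (𝓝 0) := by
      rw [← nhds_prod_eq]
      refine Continuous.tendsto' (continuous_snd.finCons continuous_fst) _ _ ?_
      exact funext (Fin.cases rfl fun _ => rfl)
    exact hcons.frequently (hcurry.filter_mono Filter.curry_le_prod)

end Perturbation

/-! ### Limits of roots -/

section Continuity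

open Polynomial

variable {ι R Y : Type*} [TopologicalSpace R] [TopologicalSpace Y]

theorem continuous_coeff_prod [CommSemiring R] [IsTopologicalSemiring R] (s : Finset ι)
    {p : Y → ι → R[X]} (hp : ∀ i N, Continuous fun y => (p y i).coeff N) (N : ℕ) :
    Continuous fun y => (∏ i ∈ s, p y i).coeff N := by
  classical
  induction s using Finset.induction_on generalizing N with
  | empty => simpa using continuous_const
  | insert a s ha ih =>
    simp only [Finset.prod_insert ha, coeff_mul]
    exact continuous_finsetSum _ fun q _ => (hp a _).mul (ih _)

variable [CommRing R] [IsTopologicalRing R]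

theorem continuous_coeff_det [Fintype ι] [DecidableEq ι] {M : Y → Matrix ι ι R[X]}
    (hM : ∀ i j N, Continuous fun y => (M y i j).coeff N) (N : ℕ) :
    Continuous fun y => (M y).det.coeff N := by
  simp only [Matrix.det_apply, finsetSum_coeff, coeff_smul]
  exact continuous_finsetSum _ fun σ _ =>
    (continuous_coeff_prod univ (fun i N => hM (σ i) i N) N).const_smul _

theorem continuous_coeff_nodal (s : Finset ι) (N : ℕ) :
    Continuous fun z : ι → R => (Lagrange.nodal s z).coeff N := by
  refine continuous_coeff_prod s (fun i N => ?_) N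
  simp only [coeff_sub, coeff_C]
  split_ifs <;> fun_prop

end Continuity

section RootLimits

open Polynomial Topology Filter

variable {n : ℕ}

theorem exists_injective_eq_C_mul_nodal {K : Type*} [Field K] [IsAlgClosed K] {p : K[X]}
    (hp : p.Separable) (hn : p.natDegree = n) :
    ∃ z : Fin n → K, Function.Injective z ∧
      p = C p.leadingCoeff * Lagrange.nodal univ z := by
  classical
  have hcard : p.roots.toFinset.card = n := by
    rw [Multiset.toFinset_card_of_nodup (nodup_roots hp), IsAlgClosed.card_roots_eq_natDegree, hn]
  let e := (Finset.equivFinOfCardEq hcard).symm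
  refine ⟨fun l => e l, Subtype.val_injective.comp e.injective, ?_⟩
  rw [Lagrange.nodal, Equiv.prod_comp e fun r : p.roots.toFinset => X - C (r : K),
    Finset.prod_coe_sort p.roots.toFinset fun r : K => X - C r,
    Finset.prod_eq_multiset_prod, Multiset.toFinset_val, (nodup_roots hp).dedup]
  exact (IsAlgClosed.splits p).eq_prod_roots

theorem exists_norm_le_of_tendsto_coeff {K : Type*} [NormedField K] {p : ℕ → K[X]} {q : K[X]}
    (hp : ∀ t, (p t).natDegree = n) (hq : q.coeff n ≠ 0)
    (hlim : ∀ N, Tendsto (fun t => (p t).coeff N) atTop (𝓝 (q.coeff N))) :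
    ∃ B : ℝ, ∀ t, p t ≠ 0 → ∀ z, (p t).IsRoot z → ‖z‖ ≤ B := by
  have hsup : Tendsto (fun t => (range n).sup fun i => ‖(p t).coeff i‖₊) atTop
      (𝓝 ((range n).sup fun i => ‖q.coeff i‖₊)) := by
    simpa only [Finset.sup_apply] using Tendsto.finset_sup_nhds_apply fun i _ => (hlim i).nnnorm
  obtain ⟨B, hB⟩ : BddAbove (Set.range fun t => cauchyBound (p t)) := by
    simp only [cauchyBound, leadingCoeff, hp]
    exact ((hsup.div (hlim n).nnnorm (nnnorm_ne_zero_iff.2 hq)).add_const 1).bddAbove_range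
  exact ⟨B, fun t h0 z hz => (hz.norm_lt_cauchyBound h0).le.trans (hB ⟨t, rfl⟩)⟩

theorem exists_tendsto_eq_C_mul_nodal {p : ℕ → ℂ[X]} {q : ℂ[X]} {z : ℕ → Fin n → ℂ}
    (hp : ∀ t, p t = C ((p t).coeff n) * Lagrange.nodal univ (z t)) (hp0 : ∀ t, p t ≠ 0)
    (hq : q.coeff n ≠ 0)
    (hlim : ∀ N, Tendsto (fun t => (p t).coeff N) atTop (𝓝 (q.coeff N))) :
    ∃ (w : Fin n → ℂ) (φ : ℕ → ℕ), StrictMono φ ∧ Tendsto (z ∘ φ) atTop (𝓝 w) ∧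
      q = C (q.coeff n) * Lagrange.nodal univ w := by
  have hcoeff (t : ℕ) : (p t).coeff n ≠ 0 := fun h => hp0 t (by rw [hp t, h, C_0, zero_mul])
  have hdegree (t : ℕ) : (p t).natDegree = n := by
    rw [hp t, natDegree_C_mul (hcoeff t), Lagrange.natDegree_nodal, card_univ, Fintype.card_fin]
  obtain ⟨B, hB⟩ := exists_norm_le_of_tendsto_coeff hdegree hq hlim
  have hbounded (t : ℕ) : z t ∈ Metric.closedBall (0 : Fin n → ℂ) (max B 0) := by
    rw [mem_closedBall_zero_iff, pi_norm_le_iff_of_nonneg (le_max_right _ _)]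
    refine fun l => (hB t (hp0 t) _ ?_).trans (le_max_left _ _)
    rw [IsRoot, hp t, eval_mul, Lagrange.eval_nodal_at_node (mem_univ l), mul_zero]
  obtain ⟨w, -, φ, hφ, hw⟩ := tendsto_subseq_of_bounded Metric.isBounded_closedBall hbounded
  refine ⟨w, φ, hφ, hw, Polynomial.ext fun N => ?_⟩
  refine tendsto_nhds_unique ((hlim N).comp hφ.tendsto_atTop) ?_
  rw [coeff_C_mul]
  refine (((hlim n).comp hφ.tendsto_atTop).mul
    (((continuous_coeff_nodal univ N).tendsto w).comp hw)).congr fun t => ?_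
  simp only [Function.comp_apply]
  rw [← coeff_C_mul, ← hp]

end RootLimits

section PerturbationLimits

open Polynomial Topology Filter

variable {k : ℕ}

theorem iterate_derivative_perturbation (g : Fin k → ℂ[X]) (ε : Fin k → ℂ) (b : Fin k) (i : ℕ) :
    derivative^[i] (perturbation g ε b) =
      derivative^[i] (g b) + C (ε b / (b : ℕ).factorial) * derivative^[i] (X ^ (b : ℕ)) := by
  rw [perturbation, iterate_map_add, ← C_mul_X_pow_eq_monomial, iterate_derivative_C_mul]

theorem continuous_coeff_Wr_perturbation (g : Fin k → ℂ[X]) (N : ℕ) :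
    Continuous fun ε => (Wr (perturbation g ε)).coeff N := by
  refine continuous_coeff_det (fun i j N => ?_) N
  simp only [Matrix.of_apply, iterate_derivative_perturbation, coeff_add, coeff_C_mul]
  fun_prop

theorem continuous_eval_wronskianMinor_perturbation (g : Fin k → ℂ[X]) (e : Fin k → ℕ) (x : ℂ) :
    Continuous fun ε => (wronskianMinor e (perturbation g ε)).eval x := by
  simp only [eval_wronskianMinor, iterate_derivative_perturbation, eval_add, eval_mul, eval_C]
  fun_prop

theorem continuous_eval_wronskianTail_perturbation (g : Fin (k + 1) → ℂ[X]) (m : ℕ) (x : ℂ) :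
    Continuous fun ε => (wronskianTail (perturbation g ε) m).eval x := by
  simp only [wronskianTail]
  split_ifs
  · simp only [wronskianCoeff, eval_mul]
    exact continuous_const.mul (continuous_eval_wronskianMinor_perturbation g _ x)
  · simpa using continuous_const

theorem natDegree_perturbation_le {g : Fin k → ℂ[X]} {d : Fin k → ℕ}
    (h : ∀ b, (g b).natDegree ≤ d b) (hd : ∀ b : Fin k, (b : ℕ) ≤ d b) (ε : Fin k → ℂ)
    (b : Fin k) : (perturbation g ε b).natDegree ≤ d b :=
  natDegree_add_le_of_degree_le (h b) ((natDegree_monomial_le _).trans (hd b))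

theorem exists_seq_tendsto_zero_Wr_perturbation {g : Fin k → ℂ[X]} {n : ℕ}
    (hc : (Wr g).coeff n ≠ 0) (hdegree : ∀ ε, (Wr (perturbation g ε)).natDegree ≤ n) :
    ∃ (ε : ℕ → Fin k → ℂ) (z : ℕ → Fin n → ℂ), Tendsto ε atTop (𝓝 0) ∧ ∀ t,
      (Wr (perturbation g (ε t))).coeff n ≠ 0 ∧ Function.Injective (z t) ∧
      Wr (perturbation g (ε t)) =
        C ((Wr (perturbation g (ε t))).coeff n) * Lagrange.nodal univ (z t) := by
  have hcoeff : ∀ᶠ ε in 𝓝 0, (Wr (perturbation g ε)).coeff n ≠ 0 :=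
    (continuous_coeff_Wr_perturbation g n).continuousAt.eventually_ne (by rwa [perturbation_zero])
  obtain ⟨ε, hε, hseq⟩ := exists_seq_forall_of_frequently
    ((frequently_separable_Wr_perturbation g).and_eventually hcoeff)
  have hnodal (t : ℕ) : ∃ z : Fin n → ℂ, Function.Injective z ∧ Wr (perturbation g (ε t)) =
      C ((Wr (perturbation g (ε t))).coeff n) * Lagrange.nodal univ z := by
    have hn := le_antisymm (hdegree (ε t)) (le_natDegree_of_ne_zero (hseq t).2)
    simpa only [leadingCoeff, hn] using exists_injective_eq_C_mul_nodal (hseq t).1 hn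
  choose z hinj hz using hnodal
  exact ⟨ε, z, hε, fun t => ⟨(hseq t).2, hinj t, hz t⟩⟩

theorem le_of_strictMono_fin {d : Fin k → ℕ} (hd : StrictMono d) (b : Fin k) : (b : ℕ) ≤ d b := by
  obtain ⟨b, hb⟩ := b
  induction b with
  | zero => exact Nat.zero_le _
  | succ b ih => exact (ih (by omega)).trans_lt (hd (Fin.mk_lt_mk.2 b.lt_succ_self))

theorem exists_add_sum_eq_of_strictMono {d : Fin k → ℕ} (hd : StrictMono d) :
    ∃ n, n + ∑ a : Fin k, (a : ℕ) = ∑ b, d b :=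
  ⟨_, Nat.sub_add_cancel (Finset.sum_le_sum fun b _ => le_of_strictMono_fin hd b)⟩

theorem exists_Wr_eq_C_mul_nodal {g : Fin (k + 1) → ℂ[X]} (hg : ∀ b, g b ≠ 0)
    (hd : StrictMono fun b => (g b).natDegree) :
    ∃ (n : ℕ) (z : Fin n → ℂ) (c : ℂ), c ≠ 0 ∧ Wr g = C c * Lagrange.nodal univ z ∧
      ∀ m ≤ k + 1, ∀ x, (betheOperator m x z).charpoly.IsRoot
        (-(-1) ^ m / c * (wronskianTail g m).eval x) := by
  obtain ⟨n, hn⟩ := exists_add_sum_eq_of_strictMono hd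
  have hdegree := natDegree_perturbation_le (fun b => le_rfl) (le_of_strictMono_fin hd)
  have hc : (Wr g).coeff n ≠ 0 := coeff_Wr_ne_zero hg hd.injective hn
  obtain ⟨ε, z, hε, hz⟩ := exists_seq_tendsto_zero_Wr_perturbation hc
    fun ε => natDegree_Wr_le (hdegree ε) hn
  have hcoeff (N : ℕ) :
      Tendsto (fun t => (Wr (perturbation g (ε t))).coeff N) atTop (𝓝 ((Wr g).coeff N)) := by
    simpa only [perturbation_zero, Function.comp_def] using
      ((continuous_coeff_Wr_perturbation g N).tendsto 0).comp hε
  obtain ⟨w, φ, hφ, hw, hW⟩ := exists_tendsto_eq_C_mul_nodal (fun t => (hz t).2.2)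
    (fun t h => (hz t).1 (by rw [h, coeff_zero])) hc hcoeff
  refine ⟨n, w, (Wr g).coeff n, hc, hW, fun m hm x => ?_⟩
  have htail : Tendsto (fun t => (wronskianTail (perturbation g (ε t)) m).eval x) atTop
      (𝓝 ((wronskianTail g m).eval x)) := by
    simpa only [perturbation_zero, Function.comp_def] using
      ((continuous_eval_wronskianTail_perturbation g m x).tendsto 0).comp hε
  have hvalue := ((tendsto_const_nhds (x := (-(-1) ^ m : ℂ))).div (hcoeff n) hc).mul htail
  have hcharpoly := ((continuous_eval_charpoly_betheOperator m x).tendsto _).comp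
    ((hvalue.comp hφ.tendsto_atTop).prodMk_nhds hw)
  refine tendsto_nhds_unique hcharpoly (tendsto_const_nhds.congr fun t => ?_)
  obtain ⟨hne, hinj, hnodal⟩ := hz (φ t)
  exact (charpoly_betheOperator_isRoot_of_Wr_eq (hdegree _) hn hinj hne hnodal hm x).symm

end PerturbationLimits

/-! ### Wronskians and spans -/

section IncreasingDegrees

open Polynomial

variable {K : Type*} [Field K] {k N : ℕ} {V : Submodule K K[X]} {p : K[X]}

theorem strictMono_finSnoc {α : Type*} [Preorder α] {d : Fin k → α} (hd : StrictMono d) {a : α}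
    (ha : ∀ b, d b < a) : StrictMono (Fin.snoc d a : Fin (k + 1) → α) := by
  intro i
  refine Fin.lastCases (fun hi => ?_) (fun j hij => ?_)
  · obtain ⟨i, rfl⟩ := Fin.exists_castSucc_eq.2 hi.ne
    simpa using ha i
  · obtain ⟨i, rfl⟩ := Fin.exists_castSucc_eq.2 (hij.trans (Fin.castSucc_lt_last j)).ne
    simpa using hd (Fin.castSucc_lt_castSucc_iff.1 hij)

theorem natDegree_lt_of_mem_degreeLT (hp : p ∈ degreeLT K N) (hp0 : p ≠ 0) : p.natDegree < N :=
  (natDegree_lt_iff_degree_lt hp0).2 (mem_degreeLT.1 hp)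

theorem mem_degreeLT_iff_coeff_eq_zero (hp : p ∈ degreeLT K (N + 1)) :
    p ∈ degreeLT K N ↔ p.coeff N = 0 := by
  rw [mem_degreeLT, degree_lt_iff_coeff_zero] at *
  exact ⟨fun h => h N le_rfl, fun h i hi =>
    hi.eq_or_lt.elim (fun hN => hN ▸ h) fun hN => hp i hN⟩

theorem span_singleton_sup_inf_degreeLT (hV : V ≤ degreeLT K (N + 1)) (hp : p ∈ V)
    (hpN : p.coeff N ≠ 0) : Submodule.span K {p} ⊔ V ⊓ degreeLT K N = V := by
  refine le_antisymm (sup_le ((Submodule.span_singleton_le_iff_mem p V).2 hp) inf_le_left)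
    fun q hq => Submodule.mem_sup.2 ?_
  refine ⟨(q.coeff N / p.coeff N) • p, Submodule.smul_mem _ _
    (Submodule.mem_span_singleton_self p), q - (q.coeff N / p.coeff N) • p, ?_, by simp⟩
  have hmem := V.sub_mem hq (V.smul_mem (q.coeff N / p.coeff N) hp)
  exact ⟨hmem, (mem_degreeLT_iff_coeff_eq_zero (hV hmem)).2 (by simp [hpN])⟩

theorem exists_strictMono_natDegree_of_le_degreeLT (hV : V ≤ degreeLT K N) :
    ∃ (k : ℕ) (g : Fin k → K[X]), Submodule.span K (Set.range g) = V ∧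
      (∀ b, g b ≠ 0) ∧ StrictMono fun b => (g b).natDegree := by
  induction N generalizing V with
  | zero =>
    refine ⟨0, Fin.elim0, ?_, fun b => b.elim0, fun b => b.elim0⟩
    rw [Set.range_eq_empty, Submodule.span_empty, eq_comm, eq_bot_iff]
    intro p hp
    simpa [degree_eq_bot] using mem_degreeLT.1 (hV hp)
  | succ N ih =>
    by_cases hVN : V ≤ degreeLT K N
    · exact ih hVN
    obtain ⟨p, hp, hpN⟩ := Set.not_subset.1 hVN
    obtain ⟨k, g, hspan, hg, hd⟩ := ih (V := V ⊓ degreeLT K N) inf_le_right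
    have hcoeff : p.coeff N ≠ 0 := fun h => hpN ((mem_degreeLT_iff_coeff_eq_zero (hV hp)).2 h)
    have hp0 : p ≠ 0 := fun h => hcoeff (by rw [h, coeff_zero])
    refine ⟨k + 1, Fin.snoc g p, ?_, Fin.lastCases (by simpa using hp0) fun b => by
      simpa using hg b, ?_⟩
    · rw [Fin.range_snoc, Submodule.span_insert, hspan,
        span_singleton_sup_inf_degreeLT hV hp hcoeff]
    · have hlt (b : Fin k) : (g b).natDegree < p.natDegree :=
        (natDegree_lt_of_mem_degreeLT (hspan.le (Submodule.subset_span ⟨b, rfl⟩)).2 (hg b)).trans_le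
          (le_natDegree_of_ne_zero hcoeff)
      simpa only [← Function.comp_def natDegree, Fin.comp_snoc] using strictMono_finSnoc hd hlt

end IncreasingDegrees

section WronskianSpan

open Polynomial

variable {k : ℕ} {f g : Fin k → ℂ[X]}

theorem linearIndependent_of_Wr_ne_zero (h : Wr g ≠ 0) : LinearIndependent ℂ g := by
  rw [Fintype.linearIndependent_iff]
  intro a ha b
  have hker : (Matrix.of fun i j : Fin k => derivative^[(i : ℕ)] (g j)) *ᵥ (fun b => C (a b)) =
      0 := by
    ext1 i
    have hderiv := congrArg derivative^[(i : ℕ)] ha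
    simp only [iterate_derivative_sum, iterate_derivative_zero, iterate_derivative_smul] at hderiv
    simpa [Matrix.mulVec, dotProduct, smul_eq_C_mul, mul_comm] using hderiv
  simpa using congrFun (Matrix.eq_zero_of_mulVec_eq_zero h hker) b

theorem Wr_dvd_of_mem_span (h : ∀ b, f b ∈ Submodule.span ℂ (Set.range g)) : Wr g ∣ Wr f := by
  choose A hA using fun b => (Submodule.mem_span_range_iff_exists_fun ℂ).1 (h b)
  refine ⟨(Matrix.of fun a b => C (A b a)).det, ?_⟩
  rw [Wr, Wr, ← Matrix.det_mul]
  refine congrArg Matrix.det (Matrix.ext fun i b => ?_)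
  simp only [Matrix.of_apply, ← hA b, iterate_derivative_sum, Matrix.mul_apply,
    iterate_derivative_smul]
  simp only [smul_eq_C_mul, mul_comm]

theorem Wr_ne_zero_of_strictMono (hg : ∀ b, g b ≠ 0) (hd : StrictMono fun b => (g b).natDegree) :
    Wr g ≠ 0 := by
  obtain ⟨n, hn⟩ := exists_add_sum_eq_of_strictMono hd
  exact fun h => coeff_Wr_ne_zero hg hd.injective hn (by rw [h, coeff_zero])

theorem exists_strictMono_natDegree (hf : LinearIndependent ℂ f) :
    ∃ g : Fin k → ℂ[X], Submodule.span ℂ (Set.range g) = Submodule.span ℂ (Set.range f) ∧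
      (∀ b, g b ≠ 0) ∧ StrictMono fun b => (g b).natDegree := by
  have hV : Submodule.span ℂ (Set.range f) ≤
      degreeLT ℂ (univ.sup (fun b => (f b).natDegree) + 1) := by
    rw [Submodule.span_le]
    rintro _ ⟨b, rfl⟩
    refine mem_degreeLT.2 (degree_le_natDegree.trans_lt ?_)
    exact_mod_cast Nat.lt_succ_of_le (Finset.le_sup (f := fun b => (f b).natDegree) (mem_univ b))
  obtain ⟨l, g, hspan, hg, hd⟩ := exists_strictMono_natDegree_of_le_degreeLT hV
  obtain rfl : l = k := by
    have hcard := finrank_span_eq_card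
      (linearIndependent_of_Wr_ne_zero (Wr_ne_zero_of_strictMono hg hd))
    rw [hspan, finrank_span_eq_card hf] at hcard
    simpa using hcard.symm
  exact ⟨g, hspan, hg, hd⟩

theorem Wr_ne_zero_iff_linearIndependent : Wr f ≠ 0 ↔ LinearIndependent ℂ f := by
  refine ⟨linearIndependent_of_Wr_ne_zero, fun hf => ?_⟩
  obtain ⟨g, hspan, hg, hd⟩ := exists_strictMono_natDegree hf
  refine ne_zero_of_dvd_ne_zero (Wr_ne_zero_of_strictMono hg hd) (Wr_dvd_of_mem_span fun b => ?_)
  exact hspan.le (Submodule.subset_span ⟨b, rfl⟩)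

theorem mem_span_range_iff_Wr_snoc_eq_zero (hg : Wr g ≠ 0) {p : ℂ[X]} :
    p ∈ Submodule.span ℂ (Set.range g) ↔ Wr (Fin.snoc g p : Fin (k + 1) → ℂ[X]) = 0 := by
  rw [← not_iff_not, ← ne_eq (Wr _), Wr_ne_zero_iff_linearIndependent, linearIndependent_finSnoc]
  exact (and_iff_right (Wr_ne_zero_iff_linearIndependent.1 hg)).symm

end WronskianSpan

/-! ### Reality of the coefficients and of the span -/

section Reality

open Polynomial

variable {k : ℕ}

theorem map_conj_eq_self_of_eval_real {p : ℂ[X]} (h : ∀ x : ℝ, (p.eval (x : ℂ)).im = 0) :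
    p.map (starRingEnd ℂ) = p := by
  refine eq_of_infinite_eval_eq _ _
    ((Set.infinite_range_of_injective Complex.ofReal_injective).mono ?_)
  rintro _ ⟨x, rfl⟩
  have hconj := eval_map_apply (p := p) (starRingEnd ℂ) (x : ℂ)
  rwa [Complex.conj_ofReal, Complex.conj_eq_iff_im.2 (h x)] at hconj

theorem exists_map_conj_C_mul_wronskianCoeff_eq {g : Fin (k + 1) → ℂ[X]} (hg : ∀ b, g b ≠ 0)
    (hd : StrictMono fun b => (g b).natDegree) (hreal : ∀ z, (Wr g).IsRoot z → z.im = 0) :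
    ∃ c : ℂ, c ≠ 0 ∧ ∀ j, (C c * wronskianCoeff g j).map (starRingEnd ℂ) =
      C c * wronskianCoeff g j := by
  obtain ⟨n, z, c, hc, hW, hroot⟩ := exists_Wr_eq_C_mul_nodal hg hd
  have hz (l : Fin n) : (z l).im = 0 :=
    hreal _ (by rw [hW, IsRoot, eval_mul, Lagrange.eval_nodal_at_node (mem_univ l), mul_zero])
  refine ⟨c⁻¹, inv_ne_zero hc, Fin.lastCases ?_ fun j => ?_⟩
  · rw [wronskianCoeff_last, hW, ← mul_assoc, ← C_mul, inv_mul_cancel₀ hc, C_1, one_mul,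
      Lagrange.nodal, Polynomial.map_prod]
    refine Finset.prod_congr rfl fun l _ => ?_
    rw [Polynomial.map_sub, map_X, map_C, Complex.conj_eq_iff_im.2 (hz l)]
  · refine map_conj_eq_self_of_eval_real fun x => ?_
    have him := im_eq_zero_of_charpoly_isRoot
      (isHermitian_betheOperator _ (Complex.ofReal_im x) hz)
      (hroot (j.rev : ℕ) (Fin.is_le _).step x)
    rw [wronskianTail_rev, div_mul_eq_mul_div, mul_div_assoc] at him
    rw [eval_mul, eval_C, inv_mul_eq_div]
    generalize (j.rev : ℕ) = m at him
    rcases neg_one_pow_eq_or ℂ m with hsign | hsign <;> simpa [hsign] using him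

theorem map_mem_span_of_map_wronskianCoeff {σ : ℂ →+* ℂ} {g : Fin k → ℂ[X]} (hW : Wr g ≠ 0)
    {c : ℂ} (hc : c ≠ 0) (hg : ∀ j, (C c * wronskianCoeff g j).map σ = C c * wronskianCoeff g j)
    {p : ℂ[X]} (hp : p ∈ Submodule.span ℂ (Set.range g)) :
    p.map σ ∈ Submodule.span ℂ (Set.range g) := by
  rw [mem_span_range_iff_Wr_snoc_eq_zero hW, Wr_snoc] at hp ⊢
  refine (mul_eq_zero.1 ?_).resolve_left (C_ne_zero.2 hc)
  calc C c * ∑ j, wronskianCoeff g j * derivative^[(j : ℕ)] (p.map σ)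
      = (C c * ∑ j, wronskianCoeff g j * derivative^[(j : ℕ)] p).map σ := by
        rw [Finset.mul_sum, Finset.mul_sum, Polynomial.map_sum]
        refine Finset.sum_congr rfl fun j _ => ?_
        rw [← mul_assoc, ← mul_assoc, Polynomial.map_mul, hg, iterate_derivative_map]
    _ = 0 := by rw [hp, mul_zero, Polynomial.map_zero]

end Reality

/-- **Theorem of Mukhin–Tarasov–Varchenko (the Shapiro Conjecture).**
If `f₁, …, f_k` are ℂ-linearly independent polynomials of degree at most `n - 1`
and every complex root of their Wronskian is real, then the ℂ-linear span of the
`f i` is stable under coefficientwise complex conjugation (equivalently, it has a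
basis of real polynomials). -/
theorem mukhin_tarasov_varchenko (k n : ℕ) (hk : 1 ≤ k) (hkn : k ≤ n)
    (f : Fin k → Polynomial ℂ) (hind : LinearIndependent ℂ f)
    (hdeg : ∀ i, (f i).degree ≤ (n - 1 : ℕ))
    (hreal : ∀ z : ℂ, (Wr f).IsRoot z → z.im = 0) :
    ∀ p ∈ Submodule.span ℂ (Set.range f),
      p.map (starRingEnd ℂ) ∈ Submodule.span ℂ (Set.range f) := by
  obtain ⟨k, rfl⟩ := Nat.exists_eq_add_of_le' hk
  obtain ⟨g, hspan, hg, hd⟩ := exists_strictMono_natDegree hind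
  have hdvd : Wr g ∣ Wr f :=
    Wr_dvd_of_mem_span fun b => hspan.ge (Submodule.subset_span ⟨b, rfl⟩)
  obtain ⟨c, hc, hconj⟩ :=
    exists_map_conj_C_mul_wronskianCoeff_eq hg hd fun z hz => hreal z (hz.dvd hdvd)
  rw [← hspan]
  exact fun p => map_mem_span_of_map_wronskianCoeff (Wr_ne_zero_of_strictMono hg hd) hc hconj
end

section
/- Let s₁ < s₂ < s₃ < s₄ be four distinct real numbers, let γ be the rational normal curve in ℂ⁴, and for each i let ℓ_i := F₂(s_i) = span_ℂ{γ(s_i), γ^{(1)}(s_i)}, the tangent plane to γ at γ(s_i). Then there are exactly two 2-dimensional ℂ-subspaces H of ℂ⁴ with H ∩ ℓ_i ≠ {0} for i = 1,2,3,4, and both of them are real. [The Shapiro Conjecture for the problem of four lines, proved in Example 1.] -/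
/-- The `m`-th derivative of the rational normal curve `γ(t) = (1, t, t²/2!, …, t^{n-1}/(n-1)!)`
in `ℂⁿ`, evaluated at `t`. -/
noncomputable def gammaVec (n m : ℕ) (t : ℂ) : Fin n → ℂ :=
  fun i => Polynomial.eval t
    (Polynomial.derivative^[m]
      (Polynomial.C ((Nat.factorial (i : ℕ) : ℂ))⁻¹ * Polynomial.X ^ (i : ℕ)))

/-- The `i`-dimensional subspace `F_i(t)` osculating the rational normal curve at `γ(t)`:
the span of `γ(t), γ'(t), …, γ^{(i-1)}(t)`. -/
noncomputable def oscFlag (n i : ℕ) (t : ℂ) : Submodule ℂ (Fin n → ℂ) :=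
  Submodule.span ℂ (Set.range fun m : Fin i => gammaVec n (m : ℕ) t)

/-- A ℂ-subspace of `ℂⁿ` is real if it is stable under coordinatewise complex conjugation. -/
def IsRealSubspace {n : ℕ} (H : Submodule ℂ (Fin n → ℂ)) : Prop :=
  ∀ v ∈ H, (fun j => (starRingEnd ℂ) (v j)) ∈ H

/-!
Identify `v ∈ ℂ⁴` with the cubic apolar to it, so that `γ(t)` becomes `(X - t)³/3!` and `F₂(t)`
becomes the space of cubics with a double root at `t`. A plane is then a pencil of cubics, and it
meets `F₂(t)` exactly when the Wronskian of the pencil vanishes at `t`.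

A plane meeting `F₂(a)` and `F₂(b)` is a pencil spanned by `(X - a)² (x (X - a) + y (X - b))` and
`(X - b)² (z (X - b) + w (X - a))`. Up to the factor `(t - a) (t - b)`, its Wronskian is the
quadratic `2xw θ² + (3xz + yw) θ + 2yz` in the Möbius coordinate `θ = (t - a) / (t - b)`. Meeting
two further tangent planes prescribes both roots `τ`, `υ` of this quadratic. By Vieta the plane is
then determined by a single `m` with `m² + 2 (τ + υ) m + 3 τ υ = 0`, and the discriminant
`4 (τ² - τ υ + υ²)` is positive for distinct real `τ` and `υ`.
-/

open Polynomial

section LinearAlgebra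

variable {K V : Type*} [Field K] [AddCommGroup V] [Module K V]

theorem linearIndependent_pair_of_disjoint {E F : Submodule K V} (hEF : Disjoint E F) {p q : V}
    (hp : p ∈ E) (hq : q ∈ F) (hp0 : p ≠ 0) (hq0 : q ≠ 0) : LinearIndependent K ![p, q] := by
  refine iSupIndep.linearIndependent ![E, F] ?_ ?_ ?_
  · exact (iSupIndep_pair zero_ne_one fun k => by fin_cases k <;> simp).2 hEF
  · simp [Fin.forall_fin_two, hp, hq]
  · simp [Fin.forall_fin_two, hp0, hq0]

theorem finrank_span_pair_eq_two {p q : V} (h : LinearIndependent K ![p, q]) :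
    Module.finrank K (Submodule.span K {p, q}) = 2 := by
  rw [← Matrix.range_cons_cons_empty p q ![], finrank_span_eq_card h, Fintype.card_fin]

theorem eq_span_pair_of_finrank_eq_two {H : Submodule K V} (hH : Module.finrank K H = 2) {p q : V}
    (h : LinearIndependent K ![p, q]) (hp : p ∈ H) (hq : q ∈ H) : H = Submodule.span K {p, q} := by
  have : FiniteDimensional K H := FiniteDimensional.of_finrank_pos (by omega)
  refine (Submodule.eq_of_le_of_finrank_eq (Submodule.span_le.2 ?_) ?_).symm
  · exact Set.pair_subset hp hq
  · rw [hH, finrank_span_pair_eq_two h]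

theorem span_pair_inf_ker_inf_ker_ne_bot_iff {p q : V} (h : LinearIndependent K ![p, q])
    (φ ψ : V →ₗ[K] K) :
    Submodule.span K {p, q} ⊓ (LinearMap.ker φ ⊓ LinearMap.ker ψ) ≠ ⊥ ↔
      φ p * ψ q - φ q * ψ p = 0 := by
  have hzero (x y : K) : x • p + y • q = 0 ↔ x = 0 ∧ y = 0 :=
    ⟨LinearIndependent.pair_iff.1 h x y, by rintro ⟨rfl, rfl⟩; simp⟩
  rw [← Matrix.det_fin_two_of, ← Matrix.exists_mulVec_eq_zero_iff, Submodule.ne_bot_iff]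
  constructor
  · rintro ⟨v, ⟨hv, hφ, hψ⟩, hv0⟩
    obtain ⟨x, y, rfl⟩ := Submodule.mem_span_pair.1 hv
    refine ⟨![x, y], by simpa [hzero] using hv0, ?_⟩
    simpa [funext_iff, Fin.forall_fin_two, mul_comm] using And.intro hφ hψ
  · rintro ⟨c, hc0, hc⟩
    refine ⟨c 0 • p + c 1 • q, ⟨Submodule.mem_span_pair.2 ⟨_, _, rfl⟩, ?_⟩, ?_⟩
    · simpa [funext_iff, Fin.forall_fin_two, Matrix.mulVec, dotProduct, mul_comm] using hc
    · simpa [hzero, funext_iff, Fin.forall_fin_two] using hc0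

theorem inf_ne_bot_of_mem {E F : Submodule K V} {v : V} (hE : v ∈ E) (hF : v ∈ F) (hv : v ≠ 0) :
    E ⊓ F ≠ ⊥ :=
  (Submodule.ne_bot_iff _).2 ⟨v, ⟨hE, hF⟩, hv⟩

end LinearAlgebra

section MoebiusAndVieta

variable {K : Type*} [Field K]

/-- The Möbius coordinate on the projective line in which `a` is `0` and `b` is `∞`. -/
def moebiusCoord (a b t : K) : K :=
  (t - a) / (t - b)

theorem moebiusCoord_ne_zero {a b t : K} (hta : t ≠ a) (htb : t ≠ b) :
    moebiusCoord a b t ≠ 0 :=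
  div_ne_zero (sub_ne_zero.2 hta) (sub_ne_zero.2 htb)

theorem moebiusCoord_injOn {a b : K} (hab : a ≠ b) : Set.InjOn (moebiusCoord a b) {b}ᶜ := by
  intro t ht u hu h
  rw [moebiusCoord, moebiusCoord, div_eq_div_iff (sub_ne_zero.2 ht) (sub_ne_zero.2 hu)] at h
  apply mul_left_cancel₀ (sub_ne_zero.2 hab)
  linear_combination h

theorem quadratic_roots_iff_vieta {A B C τ υ : K} (hτυ : τ ≠ υ) :
    A * τ ^ 2 + B * τ + C = 0 ∧ A * υ ^ 2 + B * υ + C = 0 ↔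
      B = -A * (τ + υ) ∧ C = A * (τ * υ) := by
  have hsub : τ - υ ≠ 0 := sub_ne_zero.2 hτυ
  constructor
  · rintro ⟨hτ, hυ⟩
    have hB : B = -A * (τ + υ) := by
      apply mul_left_cancel₀ hsub
      linear_combination hτ - hυ
    exact ⟨hB, by linear_combination hτ - τ * hB⟩
  · rintro ⟨rfl, rfl⟩
    constructor <;> ring

/-- The roots of `m² + 2 (τ + υ) m + 3 τ υ`, with the square completed. They parametrize the planes
meeting the tangent planes at `a`, `b`, `c`, `d` when `τ` and `υ` are the Möbius coordinates of `c`
and `d`. -/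
def transversalParams (τ υ : K) : Set K :=
  {m | (m + (τ + υ)) ^ 2 = τ ^ 2 - τ * υ + υ ^ 2}

theorem exists_mem_transversalParams_of_vieta {x y z w τ υ : K}
    (h2 : (2 : K) ≠ 0) (hτ : τ ≠ 0) (hυ : υ ≠ 0)
    (hxy : ¬(x = 0 ∧ y = 0)) (hzw : ¬(z = 0 ∧ w = 0))
    (hsum : 3 * (x * z) + y * w = -(2 * (x * w)) * (τ + υ))
    (hprod : 2 * (y * z) = 2 * (x * w) * (τ * υ)) :
    ∃ m ∈ transversalParams τ υ, ∃ r, x ≠ 0 ∧ r ≠ 0 ∧ y = x * m ∧ z = r * (τ * υ) ∧ w = r * m := by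
  have hprod' : y * z = x * w * (τ * υ) := mul_left_cancel₀ h2 (by linear_combination hprod)
  have hx : x ≠ 0 := by
    rintro rfl
    have hy : y ≠ 0 := fun hy => hxy ⟨rfl, hy⟩
    have hz : z = 0 := by simpa [hy] using hprod'
    exact hzw ⟨hz, by simpa [hy] using hsum⟩
  have hz : z ≠ 0 := by
    rintro rfl
    exact hzw ⟨rfl, by simpa [hx, hτ, hυ] using hprod'⟩
  have hw : w = z / (τ * υ) * (y / x) := by
    field_simp
    linear_combination -hprod'
  refine ⟨y / x, ?_, z / (τ * υ), hx, div_ne_zero hz (mul_ne_zero hτ hυ), by field_simp,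
    by field_simp, hw⟩
  rw [transversalParams, Set.mem_ofPred_eq]
  rw [hw] at hsum
  field_simp at hsum ⊢
  linear_combination hsum

theorem exists_transversalParams_ofReal {τ υ : ℝ} (hτυ : τ ≠ υ) :
    ∃ m₁ m₂ : ℝ, m₁ ≠ m₂ ∧ transversalParams (τ : ℂ) υ = {(m₁ : ℂ), (m₂ : ℂ)} := by
  have hdisc : 0 < τ ^ 2 - τ * υ + υ ^ 2 := by
    have := sq_pos_of_ne_zero (sub_ne_zero.2 hτυ)
    linarith [sq_nonneg τ, sq_nonneg υ]
  have hr : (√(τ ^ 2 - τ * υ + υ ^ 2) : ℂ) ^ 2 = τ ^ 2 - τ * υ + υ ^ 2 := by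
    exact_mod_cast Real.sq_sqrt hdisc.le
  refine ⟨√(τ ^ 2 - τ * υ + υ ^ 2) - (τ + υ), -√(τ ^ 2 - τ * υ + υ ^ 2) - (τ + υ), ?_, ?_⟩
  · linarith [Real.sqrt_pos.2 hdisc]
  · ext m
    rw [transversalParams, Set.mem_ofPred_eq, ← hr, sq_eq_sq_iff_eq_or_eq_neg, ← eq_sub_iff_add_eq,
      ← eq_sub_iff_add_eq]
    push_cast
    rfl

end MoebiusAndVieta

section Conjugation

theorem isRealSubspace_span {n : ℕ} {S : Set (Fin n → ℂ)} (hS : ∀ v ∈ S, star v = v) :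
    IsRealSubspace (Submodule.span ℂ S) := by
  intro v hv
  change star v ∈ _
  induction hv using Submodule.span_induction with
  | mem v hv => exact (hS v hv).symm ▸ Submodule.subset_span hv
  | zero => simp
  | add v w _ _ hv hw => exact star_add v w ▸ add_mem hv hw
  | smul c v _ hv => exact star_smul c v ▸ Submodule.smul_mem _ _ hv

theorem gammaVec_apply (n m : ℕ) (t : ℂ) (i : Fin n) :
    gammaVec n m t i =
      (i : ℕ).descFactorial m * t ^ ((i : ℕ) - m) / ((i : ℕ).factorial : ℂ) := by
  rw [gammaVec, iterate_derivative_C_mul, iterate_derivative_X_pow_eq_natCast_mul, eval_C_mul,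
    eval_natCast_mul, eval_pow, eval_X, div_eq_inv_mul]

theorem star_gammaVec (n m : ℕ) (t : ℂ) : star (gammaVec n m t) = gammaVec n m (star t) := by
  ext i
  simp [gammaVec_apply]

end Conjugation

section OsculatingPlanes

/-- The cubic `v₀ X³/3! - v₁ X²/2! + v₂ X - v₃` apolar to `v ∈ ℂ⁴`. The signs and factorials are
chosen so that `γ(t)` corresponds to `(X - t)³/3!`. -/
noncomputable def apolarCubic : (Fin 4 → ℂ) →ₗ[ℂ] ℂ[X] where
  toFun v := C (v 0 / 6) * X ^ 3 - C (v 1 / 2) * X ^ 2 + C (v 2) * X - C (v 3)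
  map_add' v w := by simp only [Pi.add_apply, add_div, C_add]; ring
  map_smul' c v := by
    simp only [Pi.smul_apply, smul_eq_mul, mul_div_assoc, C_mul, RingHom.id_apply, smul_eq_C_mul]
    ring

theorem eval_apolarCubic (v : Fin 4 → ℂ) (t : ℂ) :
    (apolarCubic v).eval t = v 0 / 6 * t ^ 3 - v 1 / 2 * t ^ 2 + v 2 * t - v 3 := by
  simp [apolarCubic]

theorem eval_derivative_apolarCubic (v : Fin 4 → ℂ) (t : ℂ) :
    (derivative (apolarCubic v)).eval t = v 0 / 2 * t ^ 2 - v 1 * t + v 2 := by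
  simp only [apolarCubic, LinearMap.coe_mk, AddHom.coe_mk, derivative_sub, derivative_add,
    derivative_C_mul, derivative_X_pow, derivative_X, derivative_C, eval_sub, eval_add, eval_mul,
    eval_pow, eval_C, eval_X, eval_one, eval_zero]
  push_cast
  ring

theorem gammaVec_four_zero (t : ℂ) : gammaVec 4 0 t = ![1, t, t ^ 2 / 2, t ^ 3 / 6] := by
  ext i
  fin_cases i <;> simp [gammaVec_apply, Nat.factorial]

theorem gammaVec_four_one (t : ℂ) : gammaVec 4 1 t = ![0, 1, t, t ^ 2 / 2] := by
  ext i
  fin_cases i <;> simp [gammaVec_apply, Nat.factorial]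
  ring

theorem oscFlag_two_eq_span_pair (n : ℕ) (t : ℂ) :
    oscFlag n 2 t = Submodule.span ℂ {gammaVec n 0 t, gammaVec n 1 t} := by
  rw [oscFlag, ← Matrix.range_cons_cons_empty _ _ ![]]
  congr 2
  ext m
  fin_cases m <;> rfl

theorem mem_oscFlag_iff_eval_apolarCubic {t : ℂ} {v : Fin 4 → ℂ} :
    v ∈ oscFlag 4 2 t ↔
      (apolarCubic v).eval t = 0 ∧ (derivative (apolarCubic v)).eval t = 0 := by
  rw [oscFlag_two_eq_span_pair, Submodule.mem_span_pair, gammaVec_four_zero, gammaVec_four_one,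
    eval_apolarCubic, eval_derivative_apolarCubic]
  constructor
  · rintro ⟨x, y, rfl⟩
    simp only [Pi.add_apply, Pi.smul_apply, smul_eq_mul, Matrix.cons_val]
    constructor <;> ring
  · rintro ⟨hval, hder⟩
    refine ⟨v 0, v 1 - t * v 0, ?_⟩
    ext i
    fin_cases i <;>
      simp only [Fin.reduceFinMk, Fin.zero_eta, Fin.mk_one, Pi.add_apply, Pi.smul_apply,
        smul_eq_mul, Matrix.cons_val]
    · ring
    · ring
    · linear_combination -hder
    · linear_combination hval - t * hder

theorem oscFlag_eq_ker_inf_ker (t : ℂ) :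
    oscFlag 4 2 t = LinearMap.ker (leval t ∘ₗ apolarCubic) ⊓
      LinearMap.ker (leval t ∘ₗ derivative ∘ₗ apolarCubic) := by
  ext v
  exact mem_oscFlag_iff_eval_apolarCubic

theorem span_pair_inf_oscFlag_ne_bot_iff {p q : Fin 4 → ℂ} (h : LinearIndependent ℂ ![p, q])
    (t : ℂ) :
    Submodule.span ℂ {p, q} ⊓ oscFlag 4 2 t ≠ ⊥ ↔
      (wronskian (apolarCubic p) (apolarCubic q)).IsRoot t := by
  rw [oscFlag_eq_ker_inf_ker, span_pair_inf_ker_inf_ker_ne_bot_iff h]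
  simp [wronskian, mul_comm]

/-- The vector of `ℂ⁴` apolar to `(X - a)² (x (X - a) + y (X - b)) / 3!`; for `a ≠ b` these are the
vectors of the tangent plane `F₂(a)`. -/
noncomputable def tangentVec (a b x y : ℂ) : Fin 4 → ℂ :=
  (x + y) • gammaVec 4 0 a + (y * (b - a) / 3) • gammaVec 4 1 a

theorem apolarCubic_tangentVec (a b x y : ℂ) :
    apolarCubic (tangentVec a b x y) =
      C (1 / 6) * ((X - C a) ^ 2 * (C x * (X - C a) + C y * (X - C b))) := by
  refine Polynomial.funext fun t => ?_
  simp only [eval_apolarCubic, tangentVec, gammaVec_four_zero, gammaVec_four_one, Pi.add_apply,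
    Pi.smul_apply, smul_eq_mul, Matrix.cons_val, eval_mul, eval_C, eval_pow, eval_add, eval_sub,
    eval_X]
  ring

theorem smul_tangentVec (a b k x y : ℂ) :
    k • tangentVec a b x y = tangentVec a b (k * x) (k * y) := by
  simp only [tangentVec]
  module

theorem tangentVec_mem_oscFlag (a b x y : ℂ) : tangentVec a b x y ∈ oscFlag 4 2 a := by
  rw [oscFlag_two_eq_span_pair]
  exact Submodule.mem_span_pair.2 ⟨_, _, rfl⟩

theorem exists_eq_tangentVec {a b : ℂ} (hab : a ≠ b) {v : Fin 4 → ℂ} (hv : v ∈ oscFlag 4 2 a) :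
    ∃ x y, v = tangentVec a b x y := by
  rw [oscFlag_two_eq_span_pair] at hv
  obtain ⟨x, y, rfl⟩ := Submodule.mem_span_pair.1 hv
  have hba : b - a ≠ 0 := sub_ne_zero.2 hab.symm
  refine ⟨x - 3 * y / (b - a), 3 * y / (b - a), ?_⟩
  rw [tangentVec]
  congr 2 <;> field_simp
  ring

theorem tangentVec_mem_oscFlag_iff {a b x y : ℂ} (hab : a ≠ b) :
    tangentVec a b x y ∈ oscFlag 4 2 b ↔ x = 0 ∧ y = 0 := by
  have hba : b - a ≠ 0 := sub_ne_zero.2 hab.symm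
  rw [mem_oscFlag_iff_eval_apolarCubic, apolarCubic_tangentVec]
  constructor
  · rintro ⟨hval, hder⟩
    obtain rfl : x = 0 := by simpa [hba] using hval
    exact ⟨rfl, by simpa [hba] using hder⟩
  · rintro ⟨rfl, rfl⟩
    simp

theorem disjoint_oscFlag {a b : ℂ} (hab : a ≠ b) : Disjoint (oscFlag 4 2 a) (oscFlag 4 2 b) := by
  rw [Submodule.disjoint_def]
  intro v hva hvb
  obtain ⟨x, y, rfl⟩ := exists_eq_tangentVec hab hva
  obtain ⟨rfl, rfl⟩ := (tangentVec_mem_oscFlag_iff hab).1 hvb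
  simp [tangentVec]

theorem tangentVec_eq_zero_iff {a b x y : ℂ} (hab : a ≠ b) :
    tangentVec a b x y = 0 ↔ x = 0 ∧ y = 0 := by
  constructor
  · intro h
    exact (tangentVec_mem_oscFlag_iff hab).1 (h ▸ zero_mem _)
  · rintro ⟨rfl, rfl⟩
    simp [tangentVec]

theorem linearIndependent_tangentVec_pair {a b x y z w : ℂ} (hab : a ≠ b)
    (hp : tangentVec a b x y ≠ 0) (hq : tangentVec b a z w ≠ 0) :
    LinearIndependent ℂ ![tangentVec a b x y, tangentVec b a z w] :=
  linearIndependent_pair_of_disjoint (disjoint_oscFlag hab) (tangentVec_mem_oscFlag a b x y)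
    (tangentVec_mem_oscFlag b a z w) hp hq

theorem exists_eq_span_tangentVec_pair {a b : ℂ} (hab : a ≠ b) {H : Submodule ℂ (Fin 4 → ℂ)}
    (hH : Module.finrank ℂ H = 2) (ha : H ⊓ oscFlag 4 2 a ≠ ⊥) (hb : H ⊓ oscFlag 4 2 b ≠ ⊥) :
    ∃ x y z w, tangentVec a b x y ≠ 0 ∧ tangentVec b a z w ≠ 0 ∧
      H = Submodule.span ℂ {tangentVec a b x y, tangentVec b a z w} := by
  obtain ⟨p, ⟨hpH, hpa⟩, hp⟩ := Submodule.ne_bot_iff _ |>.1 ha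
  obtain ⟨q, ⟨hqH, hqb⟩, hq⟩ := Submodule.ne_bot_iff _ |>.1 hb
  obtain ⟨x, y, rfl⟩ := exists_eq_tangentVec hab hpa
  obtain ⟨z, w, rfl⟩ := exists_eq_tangentVec hab.symm hqb
  exact ⟨x, y, z, w, hp, hq, eq_span_pair_of_finrank_eq_two hH
    (linearIndependent_tangentVec_pair hab hp hq) hpH hqH⟩

theorem eval_wronskian_apolarCubic_tangentVec (a b x y z w t : ℂ) :
    (wronskian (apolarCubic (tangentVec a b x y)) (apolarCubic (tangentVec b a z w))).eval t =
      (b - a) * (t - a) * (t - b) / 36 * (2 * (x * w) * (t - a) ^ 2 +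
        (3 * (x * z) + y * w) * (t - a) * (t - b) + 2 * (y * z) * (t - b) ^ 2) := by
  simp only [wronskian, apolarCubic_tangentVec, derivative_mul, derivative_C, zero_mul,
    zero_add, derivative_X_sub_C_pow, derivative_add, derivative_X_sub_C, eval_sub, eval_add,
    eval_mul, eval_pow, eval_C, eval_X, eval_one, Nat.cast_ofNat, Nat.add_one_sub_one]
  ring

theorem span_tangentVec_pair_inf_oscFlag_ne_bot_iff {a b t x y z w : ℂ} (hab : a ≠ b) (hta : t ≠ a)
    (htb : t ≠ b) (hp : tangentVec a b x y ≠ 0) (hq : tangentVec b a z w ≠ 0) :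
    Submodule.span ℂ {tangentVec a b x y, tangentVec b a z w} ⊓ oscFlag 4 2 t ≠ ⊥ ↔
      2 * (x * w) * moebiusCoord a b t ^ 2 + (3 * (x * z) + y * w) * moebiusCoord a b t +
        2 * (y * z) = 0 := by
  have htb' : t - b ≠ 0 := sub_ne_zero.2 htb
  rw [span_pair_inf_oscFlag_ne_bot_iff (linearIndependent_tangentVec_pair hab hp hq), IsRoot.def,
    eval_wronskian_apolarCubic_tangentVec,
    mul_eq_zero_iff_left (by simp [sub_ne_zero, hab.symm, hta, htb]), moebiusCoord]
  field_simp
  rw [mul_zero]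

end OsculatingPlanes

section Transversals

/-- The set of planes of `ℂ⁴` meeting the four tangent planes `F₂(sᵢ)`. -/
def planesMeetingTangents (s : Fin 4 → ℂ) : Set (Submodule ℂ (Fin 4 → ℂ)) :=
  {H | Module.finrank ℂ H = 2 ∧ ∀ i, H ⊓ oscFlag 4 2 (s i) ≠ ⊥}

/-- The plane apolar to the pencil spanned by `(X - a)² ((X - a) + m (X - b))` and
`(X - b)² (m (X - a) + k (X - b))`. -/
noncomputable def transversalPlane (a b k m : ℂ) : Submodule ℂ (Fin 4 → ℂ) :=
  Submodule.span ℂ {tangentVec a b 1 m, tangentVec b a k m}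

theorem transversalPlane_injective {a b : ℂ} (hab : a ≠ b) (k : ℂ) :
    Function.Injective (transversalPlane a b k) := by
  intro m m' h
  have hmem : tangentVec a b 1 m ∈ transversalPlane a b k m' :=
    h ▸ Submodule.subset_span (Set.mem_insert _ _)
  obtain ⟨r, r', hr⟩ := Submodule.mem_span_pair.1 hmem
  have hsub : tangentVec a b (1 - r) (m - r * m') = r' • tangentVec b a k m' := by
    rw [← sub_eq_iff_eq_add'.2 hr.symm]
    simp only [tangentVec]
    module
  obtain ⟨h1, hm⟩ := (tangentVec_mem_oscFlag_iff hab).1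
    (hsub ▸ Submodule.smul_mem _ r' (tangentVec_mem_oscFlag b a k m'))
  linear_combination hm - m' * h1

theorem span_tangentVec_pair_eq_transversalPlane {x r : ℂ} (hx : x ≠ 0) (hr : r ≠ 0)
    (a b k m : ℂ) :
    Submodule.span ℂ {tangentVec a b x (x * m), tangentVec b a (r * k) (r * m)} =
      transversalPlane a b k m := by
  rw [transversalPlane, ← smul_tangentVec, Submodule.span_insert, Submodule.span_insert,
    Submodule.span_singleton_smul_eq hr.isUnit, ← mul_one x, mul_assoc, one_mul, ← smul_tangentVec,
    Submodule.span_singleton_smul_eq hx.isUnit]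

theorem span_tangentVec_pair_mem_planesMeetingTangents_iff {s : Fin 4 → ℂ}
    (hs : Function.Injective s) {x y z w : ℂ} (hp : tangentVec (s 0) (s 1) x y ≠ 0)
    (hq : tangentVec (s 1) (s 0) z w ≠ 0) {τ υ : ℂ} (hτ : τ = moebiusCoord (s 0) (s 1) (s 2))
    (hυ : υ = moebiusCoord (s 0) (s 1) (s 3)) :
    Submodule.span ℂ {tangentVec (s 0) (s 1) x y, tangentVec (s 1) (s 0) z w} ∈
        planesMeetingTangents s ↔
      3 * (x * z) + y * w = -(2 * (x * w)) * (τ + υ) ∧ 2 * (y * z) = 2 * (x * w) * (τ * υ) := by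
  have h01 : s 0 ≠ s 1 := hs.ne (by decide)
  have h21 : s 2 ≠ s 1 := hs.ne (by decide)
  have h31 : s 3 ≠ s 1 := hs.ne (by decide)
  have hτυ : τ ≠ υ := by
    rw [hτ, hυ]
    exact (moebiusCoord_injOn h01).ne h21 h31 (hs.ne (by decide))
  have h0 := inf_ne_bot_of_mem (Submodule.subset_span
    (Set.mem_insert _ {tangentVec (s 1) (s 0) z w})) (tangentVec_mem_oscFlag _ _ _ _) hp
  have h1 := inf_ne_bot_of_mem (Submodule.subset_span
    (Set.mem_insert_of_mem (tangentVec (s 0) (s 1) x y) (Set.mem_singleton _)))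
    (tangentVec_mem_oscFlag _ _ _ _) hq
  rw [← quadratic_roots_iff_vieta hτυ, hτ, hυ,
    ← span_tangentVec_pair_inf_oscFlag_ne_bot_iff h01 (hs.ne (by decide)) h21 hp hq,
    ← span_tangentVec_pair_inf_oscFlag_ne_bot_iff h01 (hs.ne (by decide)) h31 hp hq]
  simp only [planesMeetingTangents, Set.mem_ofPred_eq, Fin.forall_fin_succ, IsEmpty.forall_iff,
    and_true, finrank_span_pair_eq_two (linearIndependent_tangentVec_pair h01 hp hq), true_and]
  exact ⟨fun h => h.2.2, fun h => ⟨h0, h1, h⟩⟩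

theorem planesMeetingTangents_eq_image {s : Fin 4 → ℂ} (hs : Function.Injective s) {τ υ : ℂ}
    (hτ : τ = moebiusCoord (s 0) (s 1) (s 2)) (hυ : υ = moebiusCoord (s 0) (s 1) (s 3)) :
    planesMeetingTangents s =
      transversalPlane (s 0) (s 1) (τ * υ) '' transversalParams τ υ := by
  have h01 : s 0 ≠ s 1 := hs.ne (by decide)
  have hτ0 : τ ≠ 0 := hτ ▸ moebiusCoord_ne_zero (hs.ne (by decide)) (hs.ne (by decide))
  have hυ0 : υ ≠ 0 := hυ ▸ moebiusCoord_ne_zero (hs.ne (by decide)) (hs.ne (by decide))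
  apply Set.Subset.antisymm
  · intro H hH
    obtain ⟨x, y, z, w, hp, hq, rfl⟩ :=
      exists_eq_span_tangentVec_pair h01 hH.1 (hH.2 0) (hH.2 1)
    obtain ⟨hsum, hprod⟩ :=
      (span_tangentVec_pair_mem_planesMeetingTangents_iff hs hp hq hτ hυ).1 hH
    rw [Ne, tangentVec_eq_zero_iff h01] at hp
    rw [Ne, tangentVec_eq_zero_iff h01.symm] at hq
    obtain ⟨m, hm, r, hx, hr, rfl, rfl, rfl⟩ :=
      exists_mem_transversalParams_of_vieta two_ne_zero hτ0 hυ0 hp hq hsum hprod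
    exact ⟨m, hm, (span_tangentVec_pair_eq_transversalPlane hx hr _ _ _ _).symm⟩
  · rintro _ ⟨m, hm, rfl⟩
    have hp : tangentVec (s 0) (s 1) 1 m ≠ 0 := by simp [tangentVec_eq_zero_iff h01]
    have hq : tangentVec (s 1) (s 0) (τ * υ) m ≠ 0 := by
      simp [tangentVec_eq_zero_iff h01.symm, hτ0, hυ0]
    refine (span_tangentVec_pair_mem_planesMeetingTangents_iff hs hp hq hτ hυ).2 ⟨?_, by ring⟩
    rw [transversalParams, Set.mem_ofPred_eq] at hm
    linear_combination hm

theorem exists_planesMeetingTangents_ofReal_eq_pair {s : Fin 4 → ℝ} (hs : Function.Injective s) :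
    ∃ k m₁ m₂ : ℝ, m₁ ≠ m₂ ∧ planesMeetingTangents (fun i => (s i : ℂ)) =
      {transversalPlane (s 0) (s 1) k m₁, transversalPlane (s 0) (s 1) k m₂} := by
  set τ := moebiusCoord (s 0) (s 1) (s 2) with hτ
  set υ := moebiusCoord (s 0) (s 1) (s 3) with hυ
  have hτυ : τ ≠ υ := (moebiusCoord_injOn (hs.ne (by decide))).ne (hs.ne (by decide))
    (hs.ne (by decide)) (hs.ne (by decide))
  obtain ⟨m₁, m₂, hm, hparams⟩ := exists_transversalParams_ofReal hτυ
  refine ⟨τ * υ, m₁, m₂, hm, ?_⟩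
  have hsC : Function.Injective fun i => (s i : ℂ) := Complex.ofReal_injective.comp hs
  rw [planesMeetingTangents_eq_image hsC (τ := τ) (υ := υ) (by simp [hτ, moebiusCoord])
    (by simp [hυ, moebiusCoord]), hparams, Set.image_pair, Complex.ofReal_mul]

theorem isRealSubspace_transversalPlane (a b k m : ℝ) :
    IsRealSubspace (transversalPlane a b k m) := by
  refine isRealSubspace_span ?_
  rintro v (rfl | rfl) <;> simp [tangentVec, star_gammaVec]

end Transversals

theorem four_lines_general (s : Fin 4 → ℝ) (hs : Function.Injective s) :
    ({H : Submodule ℂ (Fin 4 → ℂ) |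
        Module.finrank ℂ H = 2 ∧
        ∀ i : Fin 4, H ⊓ oscFlag 4 2 ((s i : ℂ)) ≠ ⊥}).ncard = 2 ∧
    ∀ H ∈ {H : Submodule ℂ (Fin 4 → ℂ) |
        Module.finrank ℂ H = 2 ∧
        ∀ i : Fin 4, H ⊓ oscFlag 4 2 ((s i : ℂ)) ≠ ⊥},
      IsRealSubspace H := by
  obtain ⟨k, m₁, m₂, hm, hset⟩ := exists_planesMeetingTangents_ofReal_eq_pair hs
  change (planesMeetingTangents _).ncard = 2 ∧ ∀ H ∈ planesMeetingTangents _, IsRealSubspace H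
  rw [hset]
  refine ⟨Set.ncard_pair ?_, ?_⟩
  · have h01 : (s 0 : ℂ) ≠ s 1 := Complex.ofReal_injective.ne (hs.ne (by decide))
    exact (transversalPlane_injective h01 k).ne (Complex.ofReal_injective.ne hm)
  · rintro H (rfl | rfl) <;> exact isRealSubspace_transversalPlane _ _ _ _

/-- **The Shapiro conjecture for the problem of four lines.** For four distinct real
numbers `s₁ < s₂ < s₃ < s₄` and the tangent planes `ℓ_i = F₂(s_i)` to the rational
normal curve in `ℂ⁴`, there are exactly two 2-dimensional subspaces `H` of `ℂ⁴`
meeting every `ℓ_i` nontrivially, and both of them are real. -/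
theorem four_lines (s : Fin 4 → ℝ)
    (hs : s 0 < s 1 ∧ s 1 < s 2 ∧ s 2 < s 3) :
    ({H : Submodule ℂ (Fin 4 → ℂ) |
        Module.finrank ℂ H = 2 ∧
        ∀ i : Fin 4, H ⊓ oscFlag 4 2 ((s i : ℂ)) ≠ ⊥}).ncard = 2 ∧
    ∀ H ∈ {H : Submodule ℂ (Fin 4 → ℂ) |
        Module.finrank ℂ H = 2 ∧
        ∀ i : Fin 4, H ⊓ oscFlag 4 2 ((s i : ℂ)) ≠ ⊥},
      IsRealSubspace H := by
  obtain ⟨h01, h12, h23⟩ := hs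
  refine four_lines_general s (StrictMono.injective (Fin.strictMono_iff_lt_succ.2 fun i => ?_))
  fin_cases i <;> assumption
end
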